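/- arXiv:2107.10450 — 2 statements merged into one kernel-verified Lean document; each statement's English description precedes it below -/
import Mathlib

section
/- Let $k, p \ge 1$ be integers and let $\sigma > 0$. Let $G \in \mathbb{R}^{k\times p}$ be a random matrix with i.i.d. standard Gaussian $N(0,1)$ entries and let $\eta \in \mathbb{R}^k$ be a random vector with i.i.d. $N(0,\sigma^2)$ entries, where $G$ and $\eta$ are independent. Then for any constant $c_2 > 0$, $$\Pr\left( \|G^\top\eta\|_2 < 2\sigma c_2\sqrt{kp} \right) \ge 1 - 2p\exp(-2k) - p\exp\left(-\frac{c_2^2}{2}\right),$$ where $\|\cdot\|_2$ denotes the Euclidean norm on $\mathbb{R}^p$. -/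
open MeasureTheory ProbabilityTheory
open scoped Matrix

open scoped NNReal ENNReal

/-- Moving the mean of a Gaussian away from a set decreases its mass by the expected factor. -/
lemma gaussianReal_apply_le_exp_mul (m : ℝ) {v : ℝ≥0} (hv : v ≠ 0) {A : Set ℝ}
    (hm : ∀ x ∈ A, x * m ≤ 0) :
    gaussianReal m v A ≤ ENNReal.ofReal (Real.exp (-m ^ 2 / (2 * v))) * gaussianReal 0 v A := by
  rw [gaussianReal_apply _ hv, gaussianReal_apply _ hv,
    ← lintegral_const_mul _ (measurable_gaussianPDF 0 v)]
  refine setLIntegral_mono (by fun_prop) fun x hx => ?_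
  have hv' : (0 : ℝ) < v := by positivity
  rw [gaussianPDF, gaussianPDF, ← ENNReal.ofReal_mul (by positivity)]
  refine ENNReal.ofReal_le_ofReal ?_
  rw [gaussianPDFReal, gaussianPDFReal, mul_left_comm, ← Real.exp_add, ← add_div]
  gcongr
  nlinarith [hm x hx]

/-- Two-sided Gaussian tail bound with leading constant `1`. -/
lemma gaussianReal_abs_ge_le {v : ℝ≥0} (hv : v ≠ 0) {s : ℝ} (hs : 0 ≤ s) :
    gaussianReal 0 v {x | s ≤ |x|} ≤ ENNReal.ofReal (Real.exp (-s ^ 2 / (2 * v))) := by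
  have := nullSingletonClass_gaussianReal (μ := 0) hv
  have h₁ : gaussianReal 0 v (Set.Ioi s) = gaussianReal (-s) v (Set.Ioi 0) := by
    rw [show gaussianReal (-s) v = (gaussianReal 0 v).map (· + (-s)) by
      rw [gaussianReal_map_add_const, zero_add],
      Measure.map_apply (by fun_prop) measurableSet_Ioi]
    congr 1; ext x; simp
  have h₂ : gaussianReal 0 v (Set.Iio (-s)) = gaussianReal s v (Set.Iio 0) := by
    rw [show gaussianReal s v = (gaussianReal 0 v).map (· + s) by
      rw [gaussianReal_map_add_const, zero_add],
      Measure.map_apply (by fun_prop) measurableSet_Iio]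
    congr 1; ext x; simp [lt_neg_iff_add_neg]
  have h₃ := gaussianReal_apply_le_exp_mul (-s) hv (A := Set.Ioi 0)
    fun x hx => by nlinarith [Set.mem_Ioi.1 hx]
  have h₄ := gaussianReal_apply_le_exp_mul s hv (A := Set.Iio 0)
    fun x hx => by nlinarith [Set.mem_Iio.1 hx]
  have h₅ : {x : ℝ | s ≤ |x|} = Set.Ici s ∪ Set.Iic (-s) := by
    ext x; simp [le_abs', or_comm]
  calc gaussianReal 0 v {x | s ≤ |x|}
      ≤ gaussianReal 0 v (Set.Ici s) + gaussianReal 0 v (Set.Iic (-s)) := by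
        rw [h₅]; exact measure_union_le _ _
    _ = gaussianReal 0 v (Set.Ioi s) + gaussianReal 0 v (Set.Iio (-s)) := by
        rw [measure_congr Ioi_ae_eq_Ici, measure_congr Iio_ae_eq_Iic]
    _ ≤ ENNReal.ofReal (Real.exp (-s ^ 2 / (2 * v))) *
          (gaussianReal 0 v (Set.Ioi 0) + gaussianReal 0 v (Set.Iio 0)) := by
        rw [h₁, h₂, mul_add]
        rw [neg_sq] at h₃
        gcongr
    _ ≤ ENNReal.ofReal (Real.exp (-s ^ 2 / (2 * v))) * 1 := by
        gcongr
        rw [← measure_union (by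
          rw [Set.disjoint_left]; intro x hx hx'
          exact lt_asymm (Set.mem_Ioi.1 hx) (Set.mem_Iio.1 hx')) measurableSet_Iio]
        exact prob_le_one
    _ = _ := mul_one _

/-- Two-sided Chernoff bound for a centered Gaussian, with leading constant `1` and free tilt. -/
lemma gaussianReal_abs_ge_le_exp (v : ℝ≥0) {s : ℝ} (hs : 0 < s) (l : ℝ) :
    gaussianReal 0 v {x | s ≤ |x|} ≤ ENNReal.ofReal (Real.exp (-l * s + l ^ 2 / 2 * v)) := by
  rcases eq_or_ne v 0 with rfl | hv
  · rw [gaussianReal_zero_var, Measure.dirac_apply' _ (measurableSet_le (by fun_prop) (by fun_prop))]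
    simp [hs]
  · refine (gaussianReal_abs_ge_le hv hs.le).trans (ENNReal.ofReal_le_ofReal ?_)
    have hv' : (0 : ℝ) < v := by positivity
    rw [Real.exp_le_exp, div_le_iff₀ (by positivity)]
    nlinarith [sq_nonneg (s - l * v)]

/-- A linear combination of independent standard Gaussians is Gaussian. -/
lemma hasLaw_sum_mul_gaussianReal {Ω ι : Type*} [MeasurableSpace Ω] [Fintype ι] {P : Measure Ω}
    [IsProbabilityMeasure P] {X : ι → Ω → ℝ} (hX : ∀ i, HasLaw (X i) (gaussianReal 0 1) P)
    (hindep : iIndepFun X P) (y : ι → ℝ) :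
    HasLaw (fun ω => ∑ i, X i ω * y i) (gaussianReal 0 (∑ i, Real.toNNReal (y i ^ 2))) P := by
  have hm : ∀ i, AEMeasurable (X i) P := fun i => (hX i).aemeasurable
  have hlaw : ∀ i, HasLaw (fun ω => X i ω * y i) (gaussianReal 0 (Real.toNNReal (y i ^ 2))) P := by
    intro i
    have := gaussianReal_mul_const (hX i) (y i)
    convert this using 2
    · simp
    · ext; simp [sq_nonneg]
  refine ⟨by fun_prop, ?_⟩
  have : IsProbabilityMeasure (P.map (fun ω => ∑ i, X i ω * y i)) :=
    Measure.isProbabilityMeasure_map (by fun_prop)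
  refine Measure.ext_of_charFun ?_
  have hi : iIndepFun (fun i ω => X i ω * y i) P :=
    hindep.comp (fun i x => x * y i) fun i => by fun_prop
  rw [hi.charFun_map_fun_sum_eq_prod fun i => by fun_prop]
  ext t
  simp only [Finset.prod_apply, fun i => (hlaw i).map_eq, charFun_gaussianReal]
  rw [← Complex.exp_sum]
  congr 1
  simp [Finset.sum_div, Finset.sum_mul]

/-- The moment generating function of the square of a centered Gaussian. -/
lemma lintegral_exp_mul_sq_gaussianReal {v : ℝ≥0} (hv : v ≠ 0) {b : ℝ} (hb : 2 * b * v < 1) :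
    ∫⁻ x, ENNReal.ofReal (Real.exp (b * x ^ 2)) ∂gaussianReal 0 v =
      ENNReal.ofReal (√(1 - 2 * b * v))⁻¹ := by
  have hv' : (0 : ℝ) < v := by positivity
  have hc : 0 < 1 / (2 * v) - b := by
    rw [sub_pos, lt_div_iff₀ (by positivity)]; linarith
  rw [gaussianReal_of_var_ne_zero _ hv, lintegral_withDensity_eq_lintegral_mul _
    (measurable_gaussianPDF 0 v) (by fun_prop)]
  have h : ∀ x : ℝ, (gaussianPDF 0 v * fun x => ENNReal.ofReal (Real.exp (b * x ^ 2))) x =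
      ENNReal.ofReal ((√(2 * Real.pi * v))⁻¹ * Real.exp (-(1 / (2 * v) - b) * x ^ 2)) := by
    intro x
    rw [Pi.mul_apply, gaussianPDF, ← ENNReal.ofReal_mul (gaussianPDFReal_nonneg _ _ _),
      gaussianPDFReal, mul_assoc, ← Real.exp_add]
    congr 3
    ring
  simp_rw [h]
  rw [← ofReal_integral_eq_lintegral_ofReal ((integrable_exp_neg_mul_sq hc).const_mul _)
    (ae_of_all _ fun x => by positivity), integral_const_mul, integral_gaussian,
    ← Real.sqrt_inv, ← Real.sqrt_inv, ← Real.sqrt_mul (by positivity)]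
  congr 2
  have : 1 - 2 * b * (v : ℝ) ≠ 0 := by linarith
  have h2 : 1 / (2 * (v : ℝ)) - b = (1 - 2 * b * v) / (2 * v) := by field_simp
  rw [h2]
  field_simp

lemma inv_sqrt_one_sub_le_exp {u : ℝ} (hu : u < 1) :
    (√(1 - u))⁻¹ ≤ Real.exp (u / (2 * (1 - u))) := by
  have h : 0 < 1 - u := by linarith
  rw [← Real.sqrt_inv]
  refine Real.sqrt_le_iff.2 ⟨(Real.exp_pos _).le, ?_⟩
  rw [← Real.exp_nat_mul]
  calc (1 - u)⁻¹ = u / (1 - u) + 1 := by field_simp; ring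
    _ ≤ Real.exp (u / (1 - u)) := Real.add_one_le_exp _
    _ = _ := by congr 1; push_cast; field_simp

/-- Chernoff bound for the inner product of two independent Gaussian vectors. -/
lemma measure_abs_sum_mul_ge_le {Ω : Type*} [MeasurableSpace Ω] {P : Measure Ω}
    [IsProbabilityMeasure P] {k : ℕ} {v : ℝ≥0} (hv : v ≠ 0) {g η : Ω → Fin k → ℝ}
    (hg_law : ∀ i, HasLaw (fun ω => g ω i) (gaussianReal 0 1) P)
    (hg_indep : iIndepFun (fun i ω => g ω i) P)
    (hη_law : ∀ i, HasLaw (fun ω => η ω i) (gaussianReal 0 v) P)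
    (hη_indep : iIndepFun (fun i ω => η ω i) P)
    (hgη : IndepFun g η P) {s : ℝ} (hs : 0 < s) {l : ℝ} (hl : l ^ 2 * v < 1) :
    P {ω | s ≤ |∑ i, g ω i * η ω i|} ≤
      ENNReal.ofReal (Real.exp (-l * s + k * (l ^ 2 * v / (2 * (1 - l ^ 2 * v))))) := by
  have hgm : AEMeasurable g P := aemeasurable_pi_iff.2 fun i => (hg_law i).aemeasurable
  have hηm : AEMeasurable η P := aemeasurable_pi_iff.2 fun i => (hη_law i).aemeasurable
  have hS : MeasurableSet {z : (Fin k → ℝ) × (Fin k → ℝ) | s ≤ |∑ i, z.1 i * z.2 i|} :=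
    measurableSet_le (by fun_prop) (by fun_prop)
  have hηmap : P.map η = Measure.pi fun _ => gaussianReal 0 v := by
    rw [show η = fun ω i => η ω i from rfl,
      hη_indep.map_fun_eq_pi_map fun i => (hη_law i).aemeasurable]
    simp only [fun i => (hη_law i).map_eq]
  have hslice : ∀ y : Fin k → ℝ,
      P.map g ((fun x => (x, y)) ⁻¹' {z | s ≤ |∑ i, z.1 i * z.2 i|}) ≤
        ENNReal.ofReal (Real.exp (-l * s)) *
          ∏ i, ENNReal.ofReal (Real.exp (l ^ 2 / 2 * y i ^ 2)) := by
    intro y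
    rw [Measure.map_apply_of_aemeasurable hgm (measurable_prodMk_right hS)]
    have h := (hasLaw_sum_mul_gaussianReal hg_law hg_indep y).measure_eq (p := fun x => s ≤ |x|)
      (measurableSet_le (by fun_prop) (by fun_prop))
    refine (h.trans_le (gaussianReal_abs_ge_le_exp _ hs l)).trans_eq ?_
    rw [← ENNReal.ofReal_prod_of_nonneg fun i _ => (Real.exp_pos _).le, ← Real.exp_sum,
      ← ENNReal.ofReal_mul (Real.exp_pos _).le, ← Real.exp_add]
    simp [Finset.mul_sum, sq_nonneg]
  have hcoord : iIndepFun (fun (i : Fin k) (y : Fin k → ℝ) =>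
      ENNReal.ofReal (Real.exp (l ^ 2 / 2 * y i ^ 2))) (Measure.pi fun _ => gaussianReal 0 v) :=
    iIndepFun_pi (X := fun _ x => ENNReal.ofReal (Real.exp (l ^ 2 / 2 * x ^ 2)))
      fun i => by fun_prop
  have hb : 2 * (l ^ 2 / 2) * (v : ℝ) < 1 := by linarith
  calc P {ω | s ≤ |∑ i, g ω i * η ω i|}
      = (P.map fun ω => (g ω, η ω)) {z | s ≤ |∑ i, z.1 i * z.2 i|} := by
        rw [Measure.map_apply_of_aemeasurable (hgm.prodMk hηm) hS]; rfl
    _ ≤ ∫⁻ y, ENNReal.ofReal (Real.exp (-l * s)) *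
          ∏ i, ENNReal.ofReal (Real.exp (l ^ 2 / 2 * y i ^ 2)) ∂P.map η := by
        have := Measure.isProbabilityMeasure_map (μ := P) hgm
        have := Measure.isProbabilityMeasure_map (μ := P) hηm
        rw [hgη.map_prod_eq_prod_map_map hgm hηm, Measure.prod_apply_symm hS]
        exact lintegral_mono hslice
    _ = ENNReal.ofReal (Real.exp (-l * s)) * ∏ _i : Fin k,
          ENNReal.ofReal (√(1 - 2 * (l ^ 2 / 2) * v))⁻¹ := by
        rw [lintegral_const_mul _ (by fun_prop), hηmap,
          lintegral_prod_eq_prod_lintegral_of_indepFun _ _ hcoord fun i => by fun_prop]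
        congr 2 with i
        rw [← lintegral_exp_mul_sq_gaussianReal hv hb]
        exact (measurePreserving_eval (fun _ : Fin k => gaussianReal 0 v) i).lintegral_comp
          (f := fun x => ENNReal.ofReal (Real.exp (l ^ 2 / 2 * x ^ 2))) (by fun_prop)
    _ ≤ ENNReal.ofReal (Real.exp (-l * s)) * ∏ _i : Fin k,
          ENNReal.ofReal (Real.exp (l ^ 2 * v / (2 * (1 - l ^ 2 * v)))) := by
        gcongr with i
        rw [mul_div_cancel₀ (l ^ 2) two_ne_zero]
        exact inv_sqrt_one_sub_le_exp hl
    _ = _ := by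
        rw [Finset.prod_const, Finset.card_univ, Fintype.card_fin,
          ← ENNReal.ofReal_pow (Real.exp_pos _).le, ← Real.exp_nat_mul,
          ← ENNReal.ofReal_mul (Real.exp_pos _).le, ← Real.exp_add]

/-- Tail bound for the inner product of a standard Gaussian vector and an independent
Gaussian vector of entrywise variance `σ ^ 2`. -/
lemma measureReal_abs_sum_mul_ge_le {Ω : Type*} [MeasurableSpace Ω] {P : Measure Ω}
    [IsProbabilityMeasure P] {k : ℕ} (hk : 0 < k) {σ : ℝ} (hσ : 0 < σ) {g η : Ω → Fin k → ℝ}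
    (hg_law : ∀ i, HasLaw (fun ω => g ω i) (gaussianReal 0 1) P)
    (hg_indep : iIndepFun (fun i ω => g ω i) P)
    (hη_law : ∀ i, HasLaw (fun ω => η ω i) (gaussianReal 0 (Real.toNNReal (σ ^ 2))) P)
    (hη_indep : iIndepFun (fun i ω => η ω i) P)
    (hgη : IndepFun g η P) {c : ℝ} (hc : 0 < c) :
    P.real {ω | 2 * σ * c * √k ≤ |∑ i, g ω i * η ω i|} ≤
      2 * Real.exp (-2 * k) + Real.exp (-(c ^ 2) / 2) := by
  have hk' : (0 : ℝ) < k := by exact_mod_cast hk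
  obtain ⟨r, hr, hrk⟩ : ∃ r : ℝ, 0 < r ∧ r ^ 2 = k := ⟨√k, by positivity, Real.sq_sqrt hk'.le⟩
  have hsqrt : √(k : ℝ) = r := by rw [← hrk, Real.sqrt_sq hr.le]
  rw [hsqrt]
  have hv : Real.toNNReal (σ ^ 2) ≠ 0 := by
    simpa using hσ.ne'
  have key : ∀ m : ℝ, m ^ 2 < 1 → P.real {ω | 2 * σ * c * r ≤ |∑ i, g ω i * η ω i|} ≤
      Real.exp (-(2 * m * c * r) + r ^ 2 * (m ^ 2 / (2 * (1 - m ^ 2)))) := by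
    intro m hm
    have hmσ : (m / σ) ^ 2 * (Real.toNNReal (σ ^ 2) : ℝ) = m ^ 2 := by
      rw [Real.coe_toNNReal _ (sq_nonneg σ)]; field_simp
    have h := measure_abs_sum_mul_ge_le hv hg_law hg_indep hη_law hη_indep hgη
      (s := 2 * σ * c * r) (by positivity) (l := m / σ) (by rwa [hmσ])
    have h' := ENNReal.toReal_le_of_le_ofReal (Real.exp_pos _).le h
    refine h'.trans_eq ?_
    rw [hmσ, hrk]
    congr 2
    field_simp
  rw [← hrk]
  rcases le_or_gt (2 * r) c with h | h
  · refine (key (2 / 3) (by norm_num)).trans ?_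
    have : Real.exp (-(2 * (2 / 3) * c * r) + r ^ 2 * ((2 / 3) ^ 2 / (2 * (1 - (2 / 3) ^ 2)))) ≤
        Real.exp (-2 * r ^ 2) := Real.exp_le_exp.2 (by norm_num; nlinarith)
    linarith [Real.exp_pos (-2 * r ^ 2), Real.exp_pos (-(c ^ 2) / 2)]
  · have hu : (c / (3 * r)) ^ 2 ≤ 4 / 9 := by
      rw [div_pow, div_le_iff₀ (by positivity)]; nlinarith
    refine (key (c / (3 * r)) (by linarith)).trans ?_
    have h₁ : (c / (3 * r)) ^ 2 / (2 * (1 - (c / (3 * r)) ^ 2)) ≤ (c / (3 * r)) ^ 2 := by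
      refine div_le_self (sq_nonneg _) (by linarith)
    have h₂ : r ^ 2 * (c / (3 * r)) ^ 2 = c ^ 2 / 9 := by field_simp; norm_num
    have h₃ : 2 * (c / (3 * r)) * c * r = 2 / 3 * c ^ 2 := by field_simp
    have : Real.exp (-(2 * (c / (3 * r)) * c * r) +
        r ^ 2 * ((c / (3 * r)) ^ 2 / (2 * (1 - (c / (3 * r)) ^ 2)))) ≤
        Real.exp (-(c ^ 2) / 2) := by
      refine Real.exp_le_exp.2 ?_
      have := mul_le_mul_of_nonneg_left h₁ (sq_nonneg r)
      rw [h₃]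
      nlinarith [sq_nonneg c]
    linarith [Real.exp_pos (-2 * r ^ 2)]

/-- A vector whose `p` coordinates are all smaller than `t` has Euclidean norm below `t √p`. -/
lemma norm_toLp_lt_mul_sqrt {p : ℕ} (hp : 0 < p) {x : Fin p → ℝ} {t : ℝ} (ht : 0 ≤ t)
    (hx : ∀ j, |x j| < t) : ‖WithLp.toLp 2 x‖ < t * √p := by
  have : Nonempty (Fin p) := ⟨⟨0, hp⟩⟩
  rw [EuclideanSpace.norm_eq, ← Real.sqrt_sq ht, ← Real.sqrt_mul (sq_nonneg t)]
  refine Real.sqrt_lt_sqrt (by positivity) ?_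
  calc ∑ j, ‖x j‖ ^ 2 < ∑ _j : Fin p, t ^ 2 :=
        Finset.sum_lt_sum_of_nonempty Finset.univ_nonempty fun j _ =>
          pow_lt_pow_left₀ (hx j) (abs_nonneg _) two_ne_zero
    _ = t ^ 2 * p := by simp [mul_comm]

theorem stmt_4 {Ω : Type*} [MeasurableSpace Ω] (P : Measure Ω) [IsProbabilityMeasure P]
    (k p : ℕ) (hp : 0 < p) (σ : ℝ) (hσ : 0 < σ)
    (G : Ω → Matrix (Fin k) (Fin p) ℝ) (η : Ω → Fin k → ℝ)
    (hG_law : ∀ i j, HasLaw (fun ω => G ω i j) (gaussianReal 0 1) P)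
    (hG_indep : iIndepFun (fun (ij : Fin k × Fin p) ω => G ω ij.1 ij.2) P)
    (hη_law : ∀ i, HasLaw (fun ω => η ω i) (gaussianReal 0 (Real.toNNReal (σ ^ 2))) P)
    (hη_indep : iIndepFun (fun (i : Fin k) ω => η ω i) P)
    (hGη : IndepFun (fun ω (ij : Fin k × Fin p) => G ω ij.1 ij.2) η P)
    (c₂ : ℝ) (hc₂ : 0 < c₂) :
    P.real {ω | ‖WithLp.toLp 2 ((G ω)ᵀ *ᵥ η ω)‖ < 2 * σ * c₂ * √((k : ℝ) * (p : ℝ))} ≥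
      1 - 2 * (p : ℝ) * Real.exp (-2 * (k : ℝ)) - (p : ℝ) * Real.exp (-(c₂ ^ 2) / 2) := by
  rcases Nat.eq_zero_or_pos k with rfl | hk
  · have hp' : (1 : ℝ) ≤ p := by exact_mod_cast hp
    have h₁ : (0 : ℝ) ≤ p * Real.exp (-(c₂ ^ 2) / 2) := by positivity
    refine le_trans ?_ measureReal_nonneg
    simp only [Nat.cast_zero, mul_zero, Real.exp_zero]
    linarith
  set A := {ω | ‖WithLp.toLp 2 ((G ω)ᵀ *ᵥ η ω)‖ < 2 * σ * c₂ * √((k : ℝ) * (p : ℝ))}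
  set B : Fin p → Set Ω := fun j => {ω | 2 * σ * c₂ * √k ≤ |∑ i, G ω i j * η ω i|} with hB
  have hcol : ∀ j, IndepFun (fun ω i => G ω i j) η P := fun j =>
    hGη.comp (φ := fun (z : Fin k × Fin p → ℝ) i => z (i, j)) (ψ := id)
      (by fun_prop) measurable_id
  have hB_le : ∀ j, P.real (B j) ≤ 2 * Real.exp (-2 * k) + Real.exp (-(c₂ ^ 2) / 2) := fun j =>
    measureReal_abs_sum_mul_ge_le (g := fun ω i => G ω i j) hk hσ (fun i => hG_law i j)
      (hG_indep.precomp (g := fun i => (i, j)) fun a b h => (Prod.ext_iff.1 h).1)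
      hη_law hη_indep (hcol j) hc₂
  have hcover : (Set.univ : Set Ω) ⊆ A ∪ ⋃ j, B j := by
    intro ω _
    by_cases h : ∃ j, ω ∈ B j
    · exact Or.inr (Set.mem_iUnion.2 h)
    · refine Or.inl ?_
      push Not at h
      have := norm_toLp_lt_mul_sqrt hp (x := (G ω)ᵀ *ᵥ η ω) (t := 2 * σ * c₂ * √k)
        (by positivity) fun j => by simpa [hB, Matrix.mulVec, dotProduct] using h j
      rwa [mul_assoc, ← Real.sqrt_mul (Nat.cast_nonneg k)] at this
  have h₁ : 1 ≤ P.real A + ∑ j, P.real (B j) := by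
    calc (1 : ℝ) = P.real Set.univ := probReal_univ.symm
      _ ≤ P.real (A ∪ ⋃ j, B j) := measureReal_mono hcover
      _ ≤ P.real A + P.real (⋃ j, B j) := measureReal_union_le _ _
      _ ≤ _ := by gcongr; exact measureReal_iUnion_fintype_le _
  have h₂ : ∑ j, P.real (B j) ≤ p * (2 * Real.exp (-2 * k) + Real.exp (-(c₂ ^ 2) / 2)) := by
    simpa [mul_add] using Finset.sum_le_card_nsmul Finset.univ _ _ fun j _ => hB_le j
  linarith
end

section
/- There is a universal constant $C>0$ such that the following holds for all $\varepsilon,\delta\in(0,1)$. Let $G$ be a DAG on the nodes $1,\dots,n$ with parent sets $\pi_i\subseteq\{1,\dots,i-1\}$, with every in-degree $|\pi_i|$ at most $d$ and with average in-degree $d_{avg}=\frac1n\sum_i|\pi_i|$. A Gaussian Bayesian network on $G$ with coefficient vectors $A_i\in\mathbb{R}^{\pi_i}$ and noise standard deviations $\sigma_i>0$ is the law of the vector $X\in\mathbb{R}^n$ given by $X_i=\sum_{j\in\pi_i}(A_i)_jX_j+\eta_i$ with independent $\eta_i\sim N(0,\sigma_i^2)$. Let $P$ be any Gaussian Bayesian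 network on $G$. Given $$m\ \ge\ C\cdot\frac{n\cdot\max(d_{avg},1)}{\varepsilon^2}\cdot\log\frac n\delta$$ i.i.d. samples from $P$, split into a first half of $\lfloor m/2\rfloor$ and a second half of $m-\lfloor m/2\rfloor$ samples, consider the estimator that, for each node $i$, computes $\hat A_i=(X_i^\top X_i)^{-1}X_i^\top B_i$ from the first half (where $X_i$ is the matrix whose rows are the sampled parent values of node $i$ and $B_i$ is the vector of sampled values of node $i$), and then computes $\hat\sigma_i^2$ as the empirical mean of the squared residuals (value of node $i$ minus $\langle\hat A_i,\text{parent values}\rangle$)$^2$ over the second half. Then, with probability at least $1-\delta$ over the samples, all the matrices $X_i^\top X_i$ are invertible, all $\hat\sigma_i$ are positive, and the Gaussian Bayesian network $Q$ on $G$ with parameters $(\hat A_i,\hat\sigma_i)$ satisfies $d_{TV}(P,Q)\le\varepsilon$, where $d_{TV}(P,Q)=\sup_A|P(A)-Q(A)|$ over measurable sets $A$. Moreover, for every such $G$ and $d$ and every $m\ge1$, the estimates $\hat A_i$ and $\hat\sigma_i^2$ can be computed with at most $C\cdot m\cdot n\cdot\max(d_{avg},1)\cdot\max(d,1)$ arithmetic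 operations: there is a sequence of at most that many instructions, depending only on $G$ and $m$, each of which loads a natural number or applies $+,-,\times,\div$ to two inputs or earlier results, that produces the estimates from every data set for which all the matrices $X_i^\top X_i$ are invertible, without ever dividing by zero. (When $m$ is of the order of the lower bound above, this is $O\big(\frac{n^2\max(d_{avg},1)^2\max(d,1)}{\varepsilon^2}\log\frac n\delta\big)$ operations.) -/
open MeasureTheory ProbabilityTheory Matrix

namespace GaussBN

/-- Total variation distance `sup_A |P(A) - Q(A)|`, the supremum being over measurable sets. -/
noncomputable def dTV {α : Type*} [MeasurableSpace α] (P Q : Measure α) : ℝ :=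
  ⨆ s : {s : Set α // MeasurableSet s}, |(P s.1).toReal - (Q s.1).toReal|

/-- The Gaussian Bayesian network with coefficient matrix `B` and noise standard deviations `σ`:
the pushforward of `⊗ᵢ N(0, σᵢ²)` under the linear map `η ↦ (I - B)⁻¹ η`. -/
noncomputable def network {n : ℕ} (B : Matrix (Fin n) (Fin n) ℝ) (σ : Fin n → ℝ) :
    Measure (Fin n → ℝ) :=
  Measure.map (fun η => (1 - B)⁻¹ *ᵥ η)
    (Measure.pi fun i => gaussianReal 0 ((σ i ^ 2).toNNReal))

/-- The average in-degree `(1/n) ∑ᵢ |πᵢ|`. -/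
noncomputable def avgInDegree {n : ℕ} (π : Fin n → Finset (Fin n)) : ℝ :=
  (∑ i, ((π i).card : ℝ)) / (n : ℝ)

/-! ### The estimator

A data set is `ω : Fin m → Fin n → ℝ`, with `ω s j` the value of node `j` in sample `s`.
The first half consists of the first `m / 2` samples, the second half of the others. -/

section Estimator

variable {n m : ℕ}

def firstHalf (ω : Fin m → Fin n → ℝ) : Fin (m / 2) → Fin n → ℝ :=
  fun s => ω ⟨s.1, lt_of_lt_of_le s.2 (Nat.div_le_self m 2)⟩

def secondHalf (ω : Fin m → Fin n → ℝ) : Fin (m - m / 2) → Fin n → ℝ :=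
  fun s => ω ⟨m / 2 + s.1, by omega⟩

/-- The matrix whose rows are the parent values of node `i` in the first half. -/
def design (π : Fin n → Finset (Fin n)) (ω : Fin m → Fin n → ℝ) (i : Fin n) :
    Matrix (Fin (m / 2)) {j // j ∈ π i} ℝ :=
  Matrix.of fun s j => firstHalf ω s j.1

/-- The matrix `Xᵢᵀ Xᵢ`. -/
def gram (π : Fin n → Finset (Fin n)) (ω : Fin m → Fin n → ℝ) (i : Fin n) :
    Matrix {j // j ∈ π i} {j // j ∈ π i} ℝ :=
  (design π ω i)ᵀ * design π ω i

/-- The least squares coefficients `(Xᵢᵀ Xᵢ)⁻¹ Xᵢᵀ Bᵢ` of node `i`. -/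
noncomputable def coefEst (π : Fin n → Finset (Fin n)) (ω : Fin m → Fin n → ℝ) (i : Fin n) :
    {j // j ∈ π i} → ℝ :=
  (gram π ω i)⁻¹ *ᵥ ((design π ω i)ᵀ *ᵥ fun s => firstHalf ω s i)

/-- The estimated coefficients of all nodes, extended by `0` outside the parent sets. -/
noncomputable def coefMatrix (π : Fin n → Finset (Fin n)) (ω : Fin m → Fin n → ℝ) :
    Matrix (Fin n) (Fin n) ℝ :=
  Matrix.of fun i j => if hj : j ∈ π i then coefEst π ω i ⟨j, hj⟩ else 0

/-- The variance estimate of node `i`: the mean squared residual over the second half. -/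
noncomputable def varEst (π : Fin n → Finset (Fin n)) (ω : Fin m → Fin n → ℝ) (i : Fin n) : ℝ :=
  (1 / ((m - m / 2 : ℕ) : ℝ)) *
    ∑ s : Fin (m - m / 2),
      (secondHalf ω s i - ∑ j : {j // j ∈ π i}, coefEst π ω i j * secondHalf ω s j.1) ^ 2

noncomputable def sdEst (π : Fin n → Finset (Fin n)) (ω : Fin m → Fin n → ℝ) (i : Fin n) : ℝ :=
  Real.sqrt (varEst π ω i)

end Estimator

/-! ### Arithmetic programs

The running time is the number of arithmetic operations. A program is a list of instructions;
each computes one real number from the inputs and from the results of the earlier instructions,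
and appends it to the memory. Division by zero and reading an empty register abort the run. -/

section Program

/-- An input, or the result of the `k`-th instruction (counted from `0`). -/
inductive Operand (ι : Type) : Type
  | input (i : ι)
  | reg (k : ℕ)

inductive Instr (ι : Type) : Type
  | const (c : ℕ)
  | add (a b : Operand ι)
  | sub (a b : Operand ι)
  | mul (a b : Operand ι)
  | div (a b : Operand ι)

variable {ι : Type}

def Operand.read (x : ι → ℝ) (mem : List ℝ) : Operand ι → Option ℝ
  | .input i => some (x i)
  | .reg k => mem[k]?

noncomputable def Instr.exec (x : ι → ℝ) (mem : List ℝ) : Instr ι → Option ℝ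
  | .const c => some (c : ℝ)
  | .add a b => (a.read x mem).bind fun u => (b.read x mem).bind fun v => some (u + v)
  | .sub a b => (a.read x mem).bind fun u => (b.read x mem).bind fun v => some (u - v)
  | .mul a b => (a.read x mem).bind fun u => (b.read x mem).bind fun v => some (u * v)
  | .div a b => (a.read x mem).bind fun u => (b.read x mem).bind fun v =>
      if v = 0 then none else some (u / v)

/-- Runs a program on the input `x`, starting from the memory `mem`. -/
noncomputable def run (x : ι → ℝ) : List (Instr ι) → List ℝ → Option (List ℝ)
  | [], mem => some mem
  | I :: prog, mem => (I.exec x mem).bind fun v => run x prog (mem ++ [v])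

/-- The program `prog`, with result locations `coefOut` and `varOut`, computes the estimator on
the graph `π` from `m` samples: on every data set for which all the matrices `Xᵢᵀ Xᵢ` are
invertible, it runs without aborting and leaves the estimates at these locations. -/
def ComputesEstimator {n m : ℕ} (π : Fin n → Finset (Fin n))
    (prog : List (Instr (Fin m × Fin n)))
    (coefOut : ∀ i : Fin n, {j // j ∈ π i} → Operand (Fin m × Fin n))
    (varOut : Fin n → Operand (Fin m × Fin n)) : Prop :=
  ∀ ω : Fin m → Fin n → ℝ, (∀ i, IsUnit (gram π ω i)) →
    ∃ mem : List ℝ, run (fun q => ω q.1 q.2) prog [] = some mem ∧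
      (∀ i j, (coefOut i j).read (fun q => ω q.1 q.2) mem = some (coefEst π ω i j)) ∧
      (∀ i, (varOut i).read (fun q => ω q.1 q.2) mem = some (varEst π ω i))

end Program

end GaussBN

namespace GaussBN

/-! ### Straight-line programs -/

section Programs

variable {ι : Type}

lemma run_append (x : ι → ℝ) (p q : List (Instr ι)) (mem : List ℝ) :
    run x (p ++ q) mem = (run x p mem).bind (run x q) := by
  induction p generalizing mem with
  | nil => simp [run]
  | cons I p ih =>
    simp only [List.cons_append, run]
    cases I.exec x mem with
    | none => rfl
    | some v => simp [ih]

lemma length_of_run {x : ι → ℝ} {p : List (Instr ι)} {mem mem' : List ℝ}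
    (h : run x p mem = some mem') : mem'.length = mem.length + p.length := by
  induction p generalizing mem with
  | nil => simp_all [run]
  | cons I p ih =>
    simp only [run] at h
    cases hv : I.exec x mem with
    | none => simp [hv] at h
    | some v =>
      simp only [hv, Option.bind_some] at h
      have := ih h
      simp at this
      simp; omega

lemma prefix_of_run {x : ι → ℝ} {p : List (Instr ι)} {mem mem' : List ℝ}
    (h : run x p mem = some mem') : mem <+: mem' := by
  induction p generalizing mem with
  | nil => simp_all [run]
  | cons I p ih =>
    simp only [run] at h
    cases hv : I.exec x mem with
    | none => simp [hv] at h
    | some v =>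
      simp only [hv, Option.bind_some] at h
      exact (List.prefix_append _ _).trans (ih h)

lemma Operand.read_of_prefix {x : ι → ℝ} {mem mem' : List ℝ} (h : mem <+: mem')
    {o : Operand ι} {v : ℝ} (ho : o.read x mem = some v) : o.read x mem' = some v := by
  cases o with
  | input i => exact ho
  | reg k =>
    obtain ⟨t, rfl⟩ := h
    simp only [Operand.read] at ho ⊢
    obtain ⟨hk, -⟩ := List.getElem?_eq_some_iff.1 ho
    rw [List.getElem?_append_left hk, ho]

/-- The program `p` does not abort on the inputs in `D`. -/
def Runs (D : Set (ι → ℝ)) (p : List (Instr ι)) : Prop :=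
  ∀ x ∈ D, ∃ mem, run x p [] = some mem

/-- After running `p` on any input in `D`, some fixed operand holds the value of `f`. -/
def Realizes (D : Set (ι → ℝ)) (p : List (Instr ι)) (f : (ι → ℝ) → ℝ) : Prop :=
  ∃ o : Operand ι, ∀ x ∈ D, ∀ mem, run x p [] = some mem → o.read x mem = some (f x)

/-- Any program that realizes all functions in `S` can be extended by at most `k` instructions
to one that realizes all functions in `T`. -/
def Derives (D : Set (ι → ℝ)) (S T : Set ((ι → ℝ) → ℝ)) (k : ℕ) : Prop :=
  ∀ p, Runs D p → (∀ f ∈ S, Realizes D p f) →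
    ∃ q, q.length ≤ k ∧ Runs D (p ++ q) ∧ ∀ f ∈ T, Realizes D (p ++ q) f

variable {D : Set (ι → ℝ)} {S T U : Set ((ι → ℝ) → ℝ)} {k l : ℕ}

lemma Realizes.append {p q : List (Instr ι)} {f : (ι → ℝ) → ℝ} (h : Realizes D p f) :
    Realizes D (p ++ q) f := by
  obtain ⟨o, ho⟩ := h
  refine ⟨o, fun x hx mem hmem => ?_⟩
  rw [run_append] at hmem
  obtain ⟨mem₀, h₀, h₁⟩ := Option.bind_eq_some_iff.1 hmem
  exact Operand.read_of_prefix (prefix_of_run h₁) (ho x hx _ h₀)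

lemma Derives.mono (h : Derives D S T k) {S' T' : Set ((ι → ℝ) → ℝ)} {k' : ℕ} (hS : S ⊆ S')
    (hT : T' ⊆ T) (hk : k ≤ k') : Derives D S' T' k' := fun p hp hp' =>
  let ⟨q, h1, h2, h3⟩ := h p hp fun f hf => hp' f (hS hf)
  ⟨q, h1.trans hk, h2, fun f hf => h3 f (hT hf)⟩

lemma Derives.trans (h : Derives D S T k) (h' : Derives D (S ∪ T) U l) :
    Derives D S (T ∪ U) (k + l) := by
  intro p hp hp'
  obtain ⟨q, h1, h2, h3⟩ := h p hp hp'
  obtain ⟨q', h1', h2', h3'⟩ := h' _ h2 (by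
    rintro f (hf | hf)
    · exact (hp' f hf).append
    · exact h3 f hf)
  refine ⟨q ++ q', by simp; omega, by rwa [← List.append_assoc], ?_⟩
  rw [← List.append_assoc]
  rintro f (hf | hf)
  · exact (h3 f hf).append
  · exact h3' f hf

lemma Derives.of_subset (h : T ⊆ S) : Derives D S T 0 := fun p hp hp' =>
  ⟨[], le_rfl, by simpa using hp, fun f hf => by simpa using hp' f (h hf)⟩

lemma Derives.biUnion {α : Type*} (s : Finset α) (T : α → Set ((ι → ℝ) → ℝ)) (k : α → ℕ)
    (h : ∀ a ∈ s, Derives D S (T a) (k a)) :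
    Derives D S (⋃ a ∈ s, T a) (∑ a ∈ s, k a) := by
  classical
  induction s using Finset.induction_on with
  | empty => simpa using Derives.of_subset (Set.empty_subset _)
  | insert a s ha ih =>
    rw [Finset.sum_insert ha, Finset.set_biUnion_insert]
    exact (h a (Finset.mem_insert_self a s)).trans
      ((ih fun b hb => h b (Finset.mem_insert_of_mem hb)).mono Set.subset_union_left subset_rfl
        le_rfl)

lemma Derives.range {α : Type*} [Fintype α] (f : α → (ι → ℝ) → ℝ) {k : ℕ}
    (h : ∀ a, Derives D S {f a} k) : Derives D S (Set.range f) (Fintype.card α * k) :=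
  (Derives.biUnion Finset.univ (fun a => {f a}) (fun _ => k) fun a _ => h a).mono subset_rfl
    (by rintro _ ⟨a, rfl⟩; simp) (by simp)

lemma Derives.instr {v : (ι → ℝ) → ℝ}
    (h : ∀ p, (∀ f ∈ S, Realizes D p f) → ∃ I : Instr ι,
      ∀ x ∈ D, ∀ mem, run x p [] = some mem → I.exec x mem = some (v x)) :
    Derives D S {v} 1 := by
  intro p hp hp'
  obtain ⟨I, hI⟩ := h p hp'
  have key : ∀ x ∈ D, ∀ mem, run x p [] = some mem → run x (p ++ [I]) [] = some (mem ++ [v x]) := by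
    intro x hx mem hmem
    simp [run_append, hmem, run, hI x hx mem hmem]
  refine ⟨[I], le_rfl, fun x hx => ?_, ?_⟩
  · obtain ⟨mem, hmem⟩ := hp x hx
    exact ⟨_, key x hx mem hmem⟩
  · rintro f rfl
    refine ⟨.reg p.length, fun x hx mem hmem => ?_⟩
    obtain ⟨mem₀, hmem₀⟩ := hp x hx
    rw [key x hx mem₀ hmem₀] at hmem
    obtain rfl := Option.some.inj hmem
    have := length_of_run hmem₀
    simp at this
    simp [Operand.read, ← this]

lemma Derives.const (c : ℕ) : Derives D S {fun _ => (c : ℝ)} 1 :=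
  .instr fun _ _ => ⟨.const c, fun _ _ _ _ => rfl⟩

section Ops

variable {f g : (ι → ℝ) → ℝ}

lemma Derives.add (hf : f ∈ S) (hg : g ∈ S) : Derives D S {fun x => f x + g x} 1 := by
  refine .instr fun p hp => ?_
  obtain ⟨a, ha⟩ := hp f hf
  obtain ⟨b, hb⟩ := hp g hg
  exact ⟨.add a b, fun x hx mem h => by simp [Instr.exec, ha x hx mem h, hb x hx mem h]⟩

lemma Derives.sub (hf : f ∈ S) (hg : g ∈ S) : Derives D S {fun x => f x - g x} 1 := by
  refine .instr fun p hp => ?_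
  obtain ⟨a, ha⟩ := hp f hf
  obtain ⟨b, hb⟩ := hp g hg
  exact ⟨.sub a b, fun x hx mem h => by simp [Instr.exec, ha x hx mem h, hb x hx mem h]⟩

lemma Derives.mul (hf : f ∈ S) (hg : g ∈ S) : Derives D S {fun x => f x * g x} 1 := by
  refine .instr fun p hp => ?_
  obtain ⟨a, ha⟩ := hp f hf
  obtain ⟨b, hb⟩ := hp g hg
  exact ⟨.mul a b, fun x hx mem h => by simp [Instr.exec, ha x hx mem h, hb x hx mem h]⟩

lemma Derives.div (hf : f ∈ S) (hg : g ∈ S) (h0 : ∀ x ∈ D, g x ≠ 0) :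
    Derives D S {fun x => f x / g x} 1 := by
  refine .instr fun p hp => ?_
  obtain ⟨a, ha⟩ := hp f hf
  obtain ⟨b, hb⟩ := hp g hg
  exact ⟨.div a b, fun x hx mem h => by
    simp [Instr.exec, ha x hx mem h, hb x hx mem h, h0 x hx]⟩

end Ops

lemma Derives.seq {v : (ι → ℝ) → ℝ} (h : Derives D S T k) (h' : Derives D (S ∪ T) {v} l) :
    Derives D S {v} (k + l) :=
  (h.trans h').mono subset_rfl Set.subset_union_right le_rfl

lemma Derives.sum {α : Type*} (s : Finset α) {f : α → (ι → ℝ) → ℝ} (hf : ∀ a ∈ s, f a ∈ S) :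
    Derives D S {fun x => ∑ a ∈ s, f a x} (s.card + 1) := by
  classical
  induction s using Finset.induction_on with
  | empty => simpa using Derives.const (D := D) (S := S) 0
  | insert a s ha ih =>
    rw [Finset.card_insert_of_notMem ha]
    simp only [Finset.sum_insert ha]
    exact (ih fun b hb => hf b (Finset.mem_insert_of_mem hb)).seq
      (.add (.inl (hf a (Finset.mem_insert_self a s))) (.inr rfl))

lemma Derives.dot {α : Type*} [Fintype α] {f g : α → (ι → ℝ) → ℝ} (hf : ∀ a, f a ∈ S)
    (hg : ∀ a, g a ∈ S) :
    Derives D S {fun x => ∑ a, f a x * g a x} (2 * Fintype.card α + 1) :=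
  ((Derives.range (fun a x => f a x * g a x) fun a => .mul (hf a) (hg a)).seq
    (.sum Finset.univ fun a _ => .inr ⟨a, rfl⟩)).mono subset_rfl subset_rfl (by simp; omega)

/-- Least squares with `k` linearly independent regressors observed in `M` samples, by
successive elimination of the regressors. -/
lemma exists_derives_leastSquares {M : ℕ} : ∀ (k : ℕ) (S : Set ((ι → ℝ) → ℝ))
    (X : Fin k → Fin M → (ι → ℝ) → ℝ) (b : Fin M → (ι → ℝ) → ℝ),
    (∀ j s, X j s ∈ S) → (∀ s, b s ∈ S) →
    (∀ x ∈ D, LinearIndependent ℝ fun (j : Fin k) (s : Fin M) => X j s x) →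
    ∃ a : Fin k → (ι → ℝ) → ℝ, Derives D S (Set.range a) (k ^ 2 * (6 * M + 5)) ∧
      ∀ x ∈ D, ∀ j, ∑ s, X j s x * (b s x - ∑ l, a l x * X l s x) = 0
  | 0, S, X, b, _, _, _ => ⟨Fin.elim0, by simpa using Derives.of_subset (by simp), by simp⟩
  | k + 1, S, X, b, hX, hb, hli => by
    let N : (ι → ℝ) → ℝ := fun x => ∑ s, X 0 s x * X 0 s x
    let c : Fin k → (ι → ℝ) → ℝ := fun j x => (∑ s, X 0 s x * X j.succ s x) / N x
    let cb : (ι → ℝ) → ℝ := fun x => (∑ s, X 0 s x * b s x) / N x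
    let X' : Fin k → Fin M → (ι → ℝ) → ℝ := fun j s x => X j.succ s x - c j x * X 0 s x
    let b' : Fin M → (ι → ℝ) → ℝ := fun s x => b s x - cb x * X 0 s x
    have hN : ∀ x ∈ D, N x ≠ 0 := by
      intro x hx h0
      refine (hli x hx).ne_zero 0 (funext fun s => ?_)
      simpa using (Finset.sum_eq_zero_iff_of_nonneg
        (fun s _ => mul_self_nonneg (X 0 s x))).1 h0 s (Finset.mem_univ s)
    have hli' : ∀ x ∈ D, LinearIndependent ℝ fun (j : Fin k) (s : Fin M) => X' j s x := by
      intro x hx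
      rw [Fintype.linearIndependent_iff]
      intro e he j
      have := (Fintype.linearIndependent_iff.1 (hli x hx))
        (Fin.cons (-∑ j, e j * c j x) e) (by
          rw [Fin.sum_univ_succ, ← he]
          ext s
          simp only [Fin.cons_zero, Fin.cons_succ, Pi.add_apply, Pi.smul_apply, Finset.sum_apply,
            smul_eq_mul, X', mul_sub, Finset.sum_sub_distrib, neg_mul, Finset.sum_mul]
          simp only [mul_assoc]
          ring) j.succ
      simpa using this
    -- the quantities of one elimination step
    have dN : Derives D S {N} (2 * M + 1) := by
      simpa using Derives.dot (D := D) (fun s => hX 0 s) (fun s => hX 0 s)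
    have dc : ∀ j, Derives D (S ∪ {N}) {c j} (2 * M + 2) := fun j => by
      have := Derives.dot (D := D) (fun s => hX 0 s) (fun s => hX j.succ s)
      refine ((this.mono Set.subset_union_left subset_rfl le_rfl).seq
        (.div (.inr rfl) (.inl (.inr (Set.mem_singleton N))) hN)).mono subset_rfl subset_rfl
        (by simp)
    have dcb : Derives D (S ∪ {N}) {cb} (2 * M + 2) := by
      have := Derives.dot (D := D) (fun s => hX 0 s) hb
      refine ((this.mono Set.subset_union_left subset_rfl le_rfl).seq
        (.div (.inr rfl) (.inl (.inr (Set.mem_singleton N))) hN)).mono subset_rfl subset_rfl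
        (by simp)
    have d1 : Derives D S ({N} ∪ (Set.range c ∪ {cb}))
        ((2 * M + 1) + (k * (2 * M + 2) + (2 * M + 2))) :=
      dN.trans <| by
        simpa using (Derives.range c dc).trans (dcb.mono Set.subset_union_left subset_rfl le_rfl)
    set S₁ := S ∪ ({N} ∪ (Set.range c ∪ {cb})) with hS₁
    have mX : ∀ j s, X j s ∈ S₁ := fun j s => .inl (hX j s)
    have mc : ∀ j, c j ∈ S₁ := fun j => .inr (.inr (.inl ⟨j, rfl⟩))
    have mcb : cb ∈ S₁ := .inr (.inr (.inr rfl))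
    have dX' : ∀ q : Fin k × Fin M, Derives D S₁ {X' q.1 q.2} 2 := fun q =>
      (Derives.mul (mc q.1) (mX 0 q.2)).seq (.sub (.inl (mX _ _)) (.inr rfl))
    have db' : ∀ s, Derives D S₁ {b' s} 2 := fun s =>
      (Derives.mul mcb (mX 0 s)).seq (.sub (.inl (.inl (hb s))) (.inr rfl))
    have d2 : Derives D S₁ (Set.range (fun q : Fin k × Fin M => X' q.1 q.2) ∪ Set.range b')
        (k * M * 2 + M * 2) := by
      simpa using (Derives.range _ dX').trans
        ((Derives.range _ db').mono Set.subset_union_left subset_rfl le_rfl)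
    obtain ⟨a', da', ha'⟩ := exists_derives_leastSquares k
      (S₁ ∪ (Set.range (fun q : Fin k × Fin M => X' q.1 q.2) ∪ Set.range b')) X' b'
      (fun j s => .inr (.inl ⟨(j, s), rfl⟩)) (fun s => .inr (.inr ⟨s, rfl⟩)) hli'
    let a₀ : (ι → ℝ) → ℝ := fun x => cb x - ∑ l, a' l x * c l x
    have d3 := d1.trans (d2.trans da')
    have d4 : Derives D (S ∪ (({N} ∪ (Set.range c ∪ {cb})) ∪
        (Set.range (fun q : Fin k × Fin M => X' q.1 q.2) ∪ Set.range b' ∪ Set.range a')))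
        {a₀} (2 * k + 2) := by
      refine ((Derives.dot (f := a') (g := c) (fun l => .inr (.inr (.inr ⟨l, rfl⟩)))
        (fun l => .inr (.inl (.inr (.inl ⟨l, rfl⟩))))).seq
        (.sub (.inl (.inr (.inl (.inr (.inr rfl))))) (.inr rfl))).mono subset_rfl subset_rfl
        (by simp)
    refine ⟨Fin.cons a₀ a', (d3.trans d4).mono subset_rfl ?_ ?_, ?_⟩
    · rintro _ ⟨j, rfl⟩
      refine Fin.cases ?_ (fun j => ?_) j
      · exact .inr rfl
      · exact .inl (.inr (.inr ⟨j, rfl⟩))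
    · nlinarith [Nat.zero_le (k * M), Nat.zero_le k, Nat.zero_le M]
    · intro x hx j
      have hres : ∀ s, b s x - ∑ l, (Fin.cons a₀ a' : Fin (k + 1) → (ι → ℝ) → ℝ) l x * X l s x
          = b' s x - ∑ l, a' l x * X' l s x := by
        intro s
        rw [Fin.sum_univ_succ]
        simp only [Fin.cons_zero, Fin.cons_succ, X', b', a₀, mul_sub, Finset.sum_sub_distrib,
          sub_mul, Finset.sum_mul, mul_assoc]
        ring
      simp only [hres]
      have hN' := hN x hx
      have o1 : ∀ l, ∑ s, X 0 s x * X' l s x = 0 := by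
        intro l
        have : ∑ s, X 0 s x * X' l s x = (∑ s, X 0 s x * X l.succ s x) - c l x * N x := by
          simp only [X', N, Finset.mul_sum, ← Finset.sum_sub_distrib]
          exact Finset.sum_congr rfl fun s _ => by ring
        rw [this]; simp only [c]; field_simp; ring
      have o2 : ∑ s, X 0 s x * b' s x = 0 := by
        have : ∑ s, X 0 s x * b' s x = (∑ s, X 0 s x * b s x) - cb x * N x := by
          simp only [b', N, Finset.mul_sum, ← Finset.sum_sub_distrib]
          exact Finset.sum_congr rfl fun s _ => by ring
        rw [this]; simp only [cb]; field_simp; ring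
      have o3 : ∑ s, X 0 s x * (b' s x - ∑ l, a' l x * X' l s x) = 0 := by
        have : ∑ s, X 0 s x * (b' s x - ∑ l, a' l x * X' l s x)
            = ∑ s, X 0 s x * b' s x - ∑ l, a' l x * ∑ s, X 0 s x * X' l s x := by
          simp only [mul_sub, Finset.sum_sub_distrib, Finset.mul_sum]
          rw [Finset.sum_comm]
          congr 1
          exact Finset.sum_congr rfl fun s _ => Finset.sum_congr rfl fun l _ => by ring
        rw [this, o2]; simp [o1]
      refine Fin.cases o3 (fun j => ?_) j
      have : ∑ s, X j.succ s x * (b' s x - ∑ l, a' l x * X' l s x)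
          = ∑ s, X' j s x * (b' s x - ∑ l, a' l x * X' l s x)
            + c j x * ∑ s, X 0 s x * (b' s x - ∑ l, a' l x * X' l s x) := by
        rw [Finset.mul_sum, ← Finset.sum_add_distrib]
        exact Finset.sum_congr rfl fun s _ => by simp only [X']; ring
      rw [this, o3, ha' x hx j]; simp

end Programs

/-! ### Least squares and the program for the estimator -/

section LeastSquares

variable {n m : ℕ} {π : Fin n → Finset (Fin n)} {ω : Fin m → Fin n → ℝ} {i : Fin n}

lemma gram_mulVec_apply (v : {j // j ∈ π i} → ℝ) (j : {j // j ∈ π i}) :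
    (gram π ω i *ᵥ v) j
      = ∑ s, firstHalf ω s j.1 * ∑ l : {j // j ∈ π i}, v l * firstHalf ω s l.1 := by
  rw [gram, ← Matrix.mulVec_mulVec]
  simp only [mulVec, dotProduct, transpose_apply, design, of_apply]
  exact Finset.sum_congr rfl fun s _ => by
    congr 1; exact Finset.sum_congr rfl fun l _ => mul_comm _ _

lemma isUnit_gram_iff : IsUnit (gram π ω i) ↔
    ∀ v : {j // j ∈ π i} → ℝ,
      (∀ s, ∑ l : {j // j ∈ π i}, v l * firstHalf ω s l.1 = 0) → v = 0 := by
  rw [← Matrix.mulVec_injective_iff_isUnit]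
  constructor
  · intro h v hv
    refine h ?_
    ext j
    rw [gram_mulVec_apply]
    simp only [hv, mul_zero, Finset.sum_const_zero, mulVec_zero, Pi.zero_apply]
  · intro h
    refine (injective_iff_map_eq_zero (Matrix.mulVecLin (gram π ω i))).2 ?_
    intro v hv
    refine h v fun s => ?_
    have hq : ∑ s, (∑ l : {j // j ∈ π i}, v l * firstHalf ω s l.1) ^ 2 = 0 := by
      have : v ⬝ᵥ (gram π ω i *ᵥ v) = 0 := by
        rw [show gram π ω i *ᵥ v = 0 from hv]; simp
      rw [← this, dotProduct]
      simp only [gram_mulVec_apply, Finset.mul_sum]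
      rw [Finset.sum_comm]
      refine Finset.sum_congr rfl fun s _ => ?_
      rw [sq, Finset.sum_mul_sum]
      exact Finset.sum_congr rfl fun j _ => Finset.sum_congr rfl fun l _ => by ring
    have := (Finset.sum_eq_zero_iff_of_nonneg (fun s _ => sq_nonneg _)).1 hq s (Finset.mem_univ s)
    exact pow_eq_zero_iff (two_ne_zero) |>.1 this

lemma eq_coefEst_iff (h : IsUnit (gram π ω i)) (a : {j // j ∈ π i} → ℝ) :
    a = coefEst π ω i ↔ ∀ j : {j // j ∈ π i},
      ∑ s, firstHalf ω s j.1 *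
        (firstHalf ω s i - ∑ l : {j // j ∈ π i}, a l * firstHalf ω s l.1) = 0 := by
  have hdet : IsUnit (gram π ω i).det := (Matrix.isUnit_iff_isUnit_det _).1 h
  have h1 : a = coefEst π ω i ↔
      gram π ω i *ᵥ a = (design π ω i)ᵀ *ᵥ fun s => firstHalf ω s i := by
    constructor
    · rintro rfl
      rw [coefEst, mulVec_mulVec, mul_nonsing_inv _ hdet, one_mulVec]
    · intro h
      rw [coefEst, ← h, mulVec_mulVec, nonsing_inv_mul _ hdet, one_mulVec]
  rw [h1, funext_iff]
  refine forall_congr' fun j => ?_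
  rw [gram_mulVec_apply]
  simp only [mul_sub, Finset.sum_sub_distrib]
  rw [sub_eq_zero, eq_comm]
  rfl

end LeastSquares

section EstimatorProgram

variable {ι : Type} {D : Set (ι → ℝ)} {S T : Set ((ι → ℝ) → ℝ)} {k : ℕ}

lemma Realizes.congr {p : List (Instr ι)} {f g : (ι → ℝ) → ℝ} (h : Realizes D p f)
    (hfg : ∀ x ∈ D, f x = g x) : Realizes D p g := by
  obtain ⟨o, ho⟩ := h
  exact ⟨o, fun x hx mem hmem => by rw [ho x hx mem hmem, hfg x hx]⟩

lemma Derives.congr (h : Derives D S T k) {T' : Set ((ι → ℝ) → ℝ)}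
    (hT : ∀ g ∈ T', ∃ f ∈ T, ∀ x ∈ D, f x = g x) : Derives D S T' k := by
  intro p hp hp'
  obtain ⟨q, h1, h2, h3⟩ := h p hp hp'
  refine ⟨q, h1, h2, fun g hg => ?_⟩
  obtain ⟨f, hf, hfg⟩ := hT g hg
  exact (h3 f hf).congr hfg

variable {n m : ℕ}

/-- The inputs on which the estimator is defined. -/
def regularData (m : ℕ) (π : Fin n → Finset (Fin n)) : Set (Fin m × Fin n → ℝ) :=
  {x | ∀ i, IsUnit (gram π (fun (s : Fin m) j => x (s, j)) i)}

/-- The inputs, as functions of the data. -/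
def inputs (m n : ℕ) : Set ((Fin m × Fin n → ℝ) → ℝ) := Set.range fun q x => x q

lemma derives_coefEst (π : Fin n → Finset (Fin n)) (i : Fin n) :
    Derives (regularData m π) (inputs m n)
      (Set.range fun (j : {j // j ∈ π i}) x => coefEst π (fun (s : Fin m) l => x (s, l)) i j)
      ((π i).card ^ 2 * (6 * (m / 2) + 5)) := by
  let e := (π i).equivFin
  let X : Fin (π i).card → Fin (m / 2) → (Fin m × Fin n → ℝ) → ℝ :=
    fun j s x => firstHalf (fun (s : Fin m) l => x (s, l)) s (e.symm j).1
  let b : Fin (m / 2) → (Fin m × Fin n → ℝ) → ℝ :=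
    fun s x => firstHalf (fun (s : Fin m) l => x (s, l)) s i
  obtain ⟨a, da, ha⟩ := exists_derives_leastSquares (D := regularData m π) (π i).card
    (inputs m n) X b
    (fun j s => ⟨_, rfl⟩) (fun s => ⟨_, rfl⟩) (by
      intro x hx
      rw [Fintype.linearIndependent_iff]
      intro c hc j
      have := isUnit_gram_iff.1 (hx i) (fun l => c (e l)) (fun s => by
        have := congrFun hc s
        simp only [Finset.sum_apply, Pi.smul_apply, smul_eq_mul, Pi.zero_apply] at this
        rw [← this, ← e.symm.sum_comp]
        simp [X])
      simpa using congrFun this (e.symm j))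
  refine da.congr ?_
  rintro _ ⟨j, rfl⟩
  refine ⟨a (e j), ⟨_, rfl⟩, fun x hx => ?_⟩
  have := (eq_coefEst_iff (hx i) (fun l => a (e l) x)).2 (fun j => by
    have := ha x hx (e j)
    simp only [X, b, Equiv.symm_apply_apply] at this
    rw [← this]
    refine Finset.sum_congr rfl fun s _ => ?_
    rw [← e.symm.sum_comp]
    simp)
  exact congrFun this j

lemma derives_varEst {D : Set (Fin m × Fin n → ℝ)} {S : Set ((Fin m × Fin n → ℝ) → ℝ)}
    (hm : 1 ≤ m) (π : Fin n → Finset (Fin n)) (i : Fin n) (hS : inputs m n ⊆ S)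
    (hc : ∀ j : {j // j ∈ π i},
      (fun x => coefEst π (fun (s : Fin m) l => x (s, l)) i j) ∈ S) :
    Derives D S {fun x => varEst π (fun (s : Fin m) l => x (s, l)) i}
      (m * (2 * (π i).card + 9)) := by
  let r : Fin (m - m / 2) → (Fin m × Fin n → ℝ) → ℝ := fun s x =>
    secondHalf (fun (s : Fin m) l => x (s, l)) s i - ∑ j : {j // j ∈ π i},
      coefEst π (fun (s : Fin m) l => x (s, l)) i j
        * secondHalf (fun (s : Fin m) l => x (s, l)) s j.1
  have dr : ∀ s, Derives D S {r s} (2 * (π i).card + 2) := fun s =>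
    ((Derives.dot (α := {j // j ∈ π i}) hc (fun j => hS ⟨(_, _), rfl⟩)).seq
      (.sub (.inl (hS ⟨(_, _), rfl⟩)) (.inr rfl))).mono subset_rfl subset_rfl (by simp)
  have dr2 : ∀ s, Derives D S {fun x => r s x ^ 2} (2 * (π i).card + 3) := fun s => by
    simp only [sq]
    exact (dr s).seq (.mul (.inr rfl) (.inr rfl))
  have dsum : Derives D S {fun x => ∑ s, r s x ^ 2}
      ((m - m / 2) * (2 * (π i).card + 3) + ((m - m / 2) + 1)) := by
    simpa using (Derives.range _ dr2).seq (.sum Finset.univ fun s _ => .inr ⟨s, rfl⟩)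
  have dinv : Derives D S {fun _ => (1 : ℝ) / ((m - m / 2 : ℕ) : ℝ)} 3 := by
    have h := (Derives.const (D := D) (S := S) 1).trans (.const (m - m / 2))
    have := h.seq (.div (f := fun _ => ((1 : ℕ) : ℝ)) (g := fun _ => ((m - m / 2 : ℕ) : ℝ))
      (.inr (.inl rfl)) (.inr (.inr rfl))
      fun _ _ => by rw [Nat.cast_ne_zero]; omega)
    simpa using this
  have h := (dsum.trans (dinv.mono Set.subset_union_left subset_rfl le_rfl)).seq
    (.mul (.inr (.inr rfl)) (.inr (.inl rfl)))
  refine h.mono subset_rfl subset_rfl ?_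
  have h1 : m - m / 2 ≤ m := Nat.sub_le _ _
  nlinarith [Nat.mul_le_mul_right (2 * (π i).card + 4) h1]

lemma sum_card_add_one_le (π : Fin n → Finset (Fin n)) :
    ∑ i, (((π i).card : ℝ) + 1) ≤ 2 * (n * max (avgInDegree π) 1) := by
  rcases Nat.eq_zero_or_pos n with rfl | hn
  · simp
  have hn' : (0 : ℝ) < n := by exact_mod_cast hn
  have h1 : ∑ i, ((π i).card : ℝ) = n * avgInDegree π := by
    rw [avgInDegree]; field_simp
  rw [Finset.sum_add_distrib, h1]
  simp only [Finset.sum_const, Finset.card_univ, Fintype.card_fin, nsmul_eq_mul, mul_one]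
  have h2 := mul_le_mul_of_nonneg_left (le_max_left (avgInDegree π) 1) hn'.le
  have h3 := mul_le_mul_of_nonneg_left (le_max_right (avgInDegree π) 1) hn'.le
  linarith

/-- The estimator is computed with `O(m · n · max(d_avg, 1) · max(d, 1))` operations. -/
theorem exists_program (n d : ℕ) (π : Fin n → Finset (Fin n)) (hd : ∀ i, (π i).card ≤ d)
    (m : ℕ) (hm : 1 ≤ m) :
    ∃ (prog : List (Instr (Fin m × Fin n)))
      (coefOut : ∀ i : Fin n, {j // j ∈ π i} → Operand (Fin m × Fin n))
      (varOut : Fin n → Operand (Fin m × Fin n)),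
      ComputesEstimator π prog coefOut varOut ∧
      (prog.length : ℝ) ≤ 20 * m * (n * max (avgInDegree π) 1) * max (d : ℝ) 1 := by
  let A : Fin n → Set ((Fin m × Fin n → ℝ) → ℝ) := fun i =>
    Set.range fun (j : {j // j ∈ π i}) x => coefEst π (fun (s : Fin m) l => x (s, l)) i j
  let V : Fin n → (Fin m × Fin n → ℝ) → ℝ := fun i x =>
    varEst π (fun (s : Fin m) l => x (s, l)) i
  let K : Fin n → ℕ := fun i =>
    (π i).card ^ 2 * (6 * (m / 2) + 5) + m * (2 * (π i).card + 9)
  have hnode : ∀ i, Derives (regularData m π) (inputs m n) (A i ∪ {V i}) (K i) := fun i =>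
    (derives_coefEst π i).trans (derives_varEst hm π i Set.subset_union_left
      fun j => .inr ⟨j, rfl⟩)
  obtain ⟨prog, hlen, hrun, hreal⟩ :=
    Derives.biUnion Finset.univ _ K (fun i _ => hnode i) [] (fun x _ => ⟨[], rfl⟩) (by
      rintro _ ⟨q, rfl⟩
      exact ⟨.input q, fun x _ mem _ => rfl⟩)
  simp only [List.nil_append] at hrun hreal
  have hA : ∀ i (j : {j // j ∈ π i}), Realizes (regularData m π) prog
      (fun x => coefEst π (fun (s : Fin m) l => x (s, l)) i j) := fun i j =>
    hreal _ (Set.mem_biUnion (Finset.mem_coe.2 (Finset.mem_univ i)) (.inl ⟨j, rfl⟩))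
  have hV : ∀ i, Realizes (regularData m π) prog (V i) := fun i =>
    hreal _ (Set.mem_biUnion (Finset.mem_coe.2 (Finset.mem_univ i)) (.inr rfl))
  choose coefOut hcoef using hA
  choose varOut hvar using hV
  refine ⟨prog, coefOut, varOut, fun ω hω => ?_, ?_⟩
  · obtain ⟨mem, hmem⟩ := hrun (fun q => ω q.1 q.2) hω
    exact ⟨mem, hmem, fun i j => hcoef i j (fun q => ω q.1 q.2) hω _ hmem,
      fun i => hvar i (fun q => ω q.1 q.2) hω _ hmem⟩
  · have hK : ∀ i, (K i : ℝ) ≤ (10 * m * max (d : ℝ) 1) * ((π i).card + 1) := by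
      intro i
      have h1 : ((π i).card : ℝ) ≤ max (d : ℝ) 1 :=
        (Nat.cast_le.2 (hd i)).trans (le_max_left _ _)
      have h2 : (1 : ℝ) ≤ max (d : ℝ) 1 := le_max_right _ _
      have h3 : (1 : ℝ) ≤ m := by exact_mod_cast hm
      have h4 : ((m / 2 : ℕ) : ℝ) ≤ m / 2 := Nat.cast_div_le
      have h5 : (0 : ℝ) ≤ (π i).card := Nat.cast_nonneg _
      simp only [K]
      push_cast
      have e1 : ((π i).card : ℝ) ^ 2 * (6 * ((m / 2 : ℕ) : ℝ) + 5)
          ≤ ((π i).card * max (d : ℝ) 1) * (8 * m) := by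
        rw [sq]
        exact mul_le_mul (mul_le_mul_of_nonneg_left h1 h5) (by linarith) (by positivity)
          (by positivity)
      have e2 : (m : ℝ) * (2 * (π i).card + 9)
          ≤ (m : ℝ) * ((2 * (π i).card + 10) * max (d : ℝ) 1) := by
        refine mul_le_mul_of_nonneg_left ?_ (by positivity)
        nlinarith
      linarith
    calc (prog.length : ℝ) ≤ ((∑ i, K i : ℕ) : ℝ) := by exact_mod_cast hlen
      _ ≤ ∑ i, (10 * m * max (d : ℝ) 1) * (((π i).card : ℝ) + 1) := by
        push_cast; exact Finset.sum_le_sum fun i _ => hK i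
      _ ≤ (10 * m * max (d : ℝ) 1) * (2 * (n * max (avgInDegree π) 1)) := by
        rw [← Finset.mul_sum]
        exact mul_le_mul_of_nonneg_left (sum_card_add_one_le π) (by positivity)
      _ = _ := by ring

end EstimatorProgram

/-! ### Total variation and relative entropy -/

section TotalVariation

open Real

lemma sq_integral_le {α : Type*} [MeasurableSpace α] {μ : Measure α} [IsFiniteMeasure μ]
    {u : α → ℝ} (hu : Integrable u μ) (hu2 : Integrable (fun x => u x ^ 2) μ) :
    (∫ x, u x ∂μ) ^ 2 ≤ μ.real Set.univ * ∫ x, u x ^ 2 ∂μ := by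
  have key : ∀ t : ℝ, 0 ≤ μ.real Set.univ * (t * t) + (-2 * ∫ x, u x ∂μ) * t + ∫ x, u x ^ 2 ∂μ := by
    intro t
    have h : 0 ≤ ∫ x, (u x - t) ^ 2 ∂μ := integral_nonneg fun x => sq_nonneg _
    have e : ∫ x, (u x - t) ^ 2 ∂μ
        = (∫ x, u x ^ 2 ∂μ) - 2 * t * (∫ x, u x ∂μ) + μ.real Set.univ * t ^ 2 := by
      have : (fun x => (u x - t) ^ 2) = fun x => (u x ^ 2 - (2 * t) * u x) + t ^ 2 := by
        ext x; ring
      have hi : Integrable (fun x => u x ^ 2 - (2 * t) * u x) μ := hu2.sub (hu.const_mul _)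
      rw [this, integral_add hi (integrable_const _), integral_sub hu2 (hu.const_mul _),
        integral_const_mul, integral_const, smul_eq_mul]
    nlinarith
  have := discrim_le_zero key
  rw [discrim] at this
  nlinarith

/-- If `Q` has density `exp (-Z)` with respect to `P`, then `dTV P Q ^ 2 ≤ ∫ Z ∂P`. -/
lemma dTV_le_of_integral_le {α : Type*} [MeasurableSpace α] {P Q : Measure α}
    [IsProbabilityMeasure P] [IsProbabilityMeasure Q] {Z : α → ℝ} (hZ : Measurable Z)
    (hZi : Integrable Z P)
    (hQ : Q = P.withDensity fun x => ENNReal.ofReal (exp (-Z x))) {ε : ℝ} (hε : 0 ≤ ε)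
    (h : ∫ x, Z x ∂P ≤ ε ^ 2) : dTV P Q ≤ ε := by
  have hint : Integrable (fun x => exp (-Z x)) P := by
    refine ⟨by fun_prop, ?_⟩
    rw [hasFiniteIntegral_iff_ofReal (Filter.Eventually.of_forall fun x => (exp_pos _).le)]
    have := measure_univ (μ := Q)
    rw [hQ, withDensity_apply _ MeasurableSet.univ, Measure.restrict_univ] at this
    rw [this]; exact ENNReal.one_lt_top
  set u : α → ℝ := fun x => exp (-Z x / 2) with hu
  have hu2 : ∀ x, u x ^ 2 = exp (-Z x) := fun x => by
    rw [hu, ← exp_nat_mul]; congr 1; push_cast; ring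
  have hu2i : Integrable (fun x => u x ^ 2) P := by simpa only [hu2] using hint
  have hui : Integrable u P := by
    refine Integrable.mono' (hint.add (integrable_const 1)) (by fun_prop)
      (Filter.Eventually.of_forall fun x => ?_)
    rw [norm_of_nonneg (exp_pos _).le]
    have h1 := hu2 x
    have h2 : 0 < u x := exp_pos _
    simp only [Pi.add_apply, ← h1]
    nlinarith [sq_nonneg (u x - 1)]
  have hQs : ∀ s, MeasurableSet s → (Q s).toReal = ∫ x in s, u x ^ 2 ∂P := by
    intro s hs
    rw [hQ, withDensity_apply _ hs, integral_eq_lintegral_of_nonneg_ae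
      (Filter.Eventually.of_forall fun x => sq_nonneg _) hu2i.restrict.aestronglyMeasurable]
    simp only [hu2]
  set κ := ∫ x, Z x ∂P with hκ
  have hJ : exp (-κ / 2) ≤ ∫ x, u x ∂P := by
    have h1 : ∀ x, exp (-κ / 2) * (1 - (Z x - κ) / 2) ≤ u x := by
      intro x
      have h2 := add_one_le_exp (-(Z x - κ) / 2)
      have h3 : u x = exp (-κ / 2) * exp (-(Z x - κ) / 2) := by
        simp only [hu]; rw [← exp_add]; congr 1; ring
      rw [h3]
      exact mul_le_mul_of_nonneg_left (by linarith) (exp_pos _).le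
    have hi' : Integrable (fun x => (Z x - κ) / 2) P :=
      (hZi.sub (integrable_const κ)).div_const 2
    have hi : Integrable (fun x => exp (-κ / 2) * (1 - (Z x - κ) / 2)) P :=
      ((integrable_const 1).sub hi').const_mul _
    have := integral_mono hi hui h1
    rwa [integral_const_mul, integral_sub (integrable_const 1) hi', integral_div,
      integral_sub hZi (integrable_const κ), integral_const, integral_const, ← hκ, probReal_univ,
      one_smul, one_smul, sub_self, zero_div, sub_zero, mul_one] at this
  have hJ2 : 1 - κ ≤ (∫ x, u x ∂P) ^ 2 := by
    have h1 : exp (-κ) ≤ (∫ x, u x ∂P) ^ 2 := by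
      have : exp (-κ) = exp (-κ / 2) ^ 2 := by
        rw [← exp_nat_mul]; congr 1; push_cast; ring
      rw [this]
      exact pow_le_pow_left₀ (exp_pos _).le hJ 2
    linarith [add_one_le_exp (-κ)]
  have : Nonempty {s : Set α // MeasurableSet s} := ⟨⟨∅, MeasurableSet.empty⟩⟩
  refine ciSup_le fun ⟨s, hs⟩ => ?_
  have hs' := hs.compl
  have c1 := sq_integral_le (μ := P.restrict s) hui.restrict hu2i.restrict
  have c2 := sq_integral_le (μ := P.restrict sᶜ) hui.restrict hu2i.restrict
  rw [← hQs s hs, measureReal_restrict_apply_univ] at c1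
  rw [← hQs _ hs', measureReal_restrict_apply_univ] at c2
  have hsum := integral_add_compl hs hui
  have hPc : P.real sᶜ = 1 - P.real s := probReal_compl_eq_one_sub hs
  have hQc : (Q sᶜ).toReal = 1 - (Q s).toReal := probReal_compl_eq_one_sub hs
  rw [hPc, hQc] at c2
  rw [← hsum] at hJ2
  change |P.real s - (Q s).toReal| ≤ ε
  have ha0 : 0 ≤ P.real s := measureReal_nonneg
  have ha1 : P.real s ≤ 1 := measureReal_le_one
  have hb0 : 0 ≤ (Q s).toReal := ENNReal.toReal_nonneg
  have hb1 : (Q s).toReal ≤ 1 := measureReal_le_one (μ := Q) (s := s)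
  generalize P.real s = a at *
  generalize (Q s).toReal = b at *
  generalize ∫ x in s, u x ∂P = I at *
  generalize ∫ x in sᶜ, u x ∂P = J at *
  have hIJ : 2 * (I * J) ≤ a * (1 - a) + b * (1 - b) := by
    have h1 : (I * J) ^ 2 ≤ (a * (1 - a)) * (b * (1 - b)) := by
      calc (I * J) ^ 2 = I ^ 2 * J ^ 2 := by ring
        _ ≤ (a * b) * ((1 - a) * (1 - b)) := by
          refine mul_le_mul c1 c2 (sq_nonneg _) (by positivity)
        _ = _ := by ring
    have h2 : 0 ≤ a * (1 - a) := mul_nonneg ha0 (by linarith)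
    have h3 : 0 ≤ b * (1 - b) := mul_nonneg hb0 (by linarith)
    refine le_of_abs_le (abs_le_of_sq_le_sq ?_ (by linarith))
    nlinarith [sq_nonneg (a * (1 - a) - b * (1 - b))]
  refine abs_le_of_sq_le_sq ?_ hε
  nlinarith

end TotalVariation

/-! ### Gaussian laws -/

section Gaussian

open scoped NNReal ENNReal
open Real

lemma map_dotProduct_pi_gaussianReal {ι : Type*} [Fintype ι] (c : ι → ℝ) :
    (Measure.pi fun _ : ι => gaussianReal 0 1).map (fun x => c ⬝ᵥ x)
      = gaussianReal 0 (c ⬝ᵥ c).toNNReal := by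
  have hX : ∀ i : ι, HasGaussianLaw (fun x : ι → ℝ => c i * x i)
      (Measure.pi fun _ : ι => gaussianReal 0 1) := by
    intro i
    constructor
    have : (Measure.pi fun _ : ι => gaussianReal 0 1).map (fun x => c i * x i)
        = (gaussianReal 0 1).map (fun y => c i * y) := by
      conv_rhs => rw [← (measurePreserving_eval (fun _ : ι => gaussianReal 0 1) i).map_eq]
      rw [Measure.map_map (by fun_prop) (by fun_prop)]
      rfl
    rw [this, gaussianReal_map_const_mul]
    infer_instance
  have hind : iIndepFun (fun (i : ι) (x : ι → ℝ) => c i * x i)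
      (Measure.pi fun _ : ι => gaussianReal 0 1) :=
    iIndepFun_pi (X := fun (i : ι) (y : ℝ) => c i * y) fun i => by fun_prop
  have hmem : ∀ i, MemLp (fun y : ℝ => c i * y) 2 (gaussianReal 0 1) := fun i =>
    (memLp_id_gaussianReal' 2 (by simp)).const_mul (c i)
  have h := (iIndepFun.hasGaussianLaw_fun_sum hX hind).map_eq_gaussianReal
  have hmean : ∫ x, ∑ i, c i * x i ∂(Measure.pi fun _ : ι => gaussianReal 0 1) = 0 := by
    rw [integral_finsetSum _ fun i _ => (hX i).integrable]
    refine Finset.sum_eq_zero fun i _ => ?_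
    have e := integral_comp_eval (μ := fun _ : ι => gaussianReal 0 1) (i := i)
      (f := fun y : ℝ => y) aestronglyMeasurable_id
    rw [integral_const_mul, e]
    simp
  have hvar : Var[fun x => ∑ i, c i * x i; Measure.pi fun _ : ι => gaussianReal 0 1]
      = c ⬝ᵥ c := by
    have e : (fun x : ι → ℝ => ∑ i, c i * x i) = ∑ i, fun x : ι → ℝ => c i * x i := by
      ext x; simp
    rw [e, variance_sum_pi (X := fun i y => c i * y) hmem]
    refine Finset.sum_congr rfl fun i _ => ?_
    rw [variance_const_mul, variance_fun_id_gaussianReal]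
    simp [sq]
  rw [hmean, hvar] at h
  exact h

/-- The sample of the network driven by the standard Gaussian vector `g`. -/
noncomputable def netMap {n : ℕ} (B : Matrix (Fin n) (Fin n) ℝ) (σ : Fin n → ℝ)
    (g : Fin n → ℝ) : Fin n → ℝ :=
  (1 - B)⁻¹ *ᵥ fun j => σ j * g j

lemma measurable_mulVec {n : ℕ} (A : Matrix (Fin n) (Fin n) ℝ) :
    Measurable fun x : Fin n → ℝ => A *ᵥ x :=
  (Matrix.mulVecLin A).continuous_of_finiteDimensional.measurable

lemma measurable_netMap {n : ℕ} (B : Matrix (Fin n) (Fin n) ℝ) (σ : Fin n → ℝ) :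
    Measurable (netMap B σ) :=
  (measurable_mulVec (1 - B)⁻¹).comp (by fun_prop)

lemma network_eq_map {n : ℕ} (B : Matrix (Fin n) (Fin n) ℝ) (σ : Fin n → ℝ) :
    network B σ = (Measure.pi fun _ : Fin n => gaussianReal 0 1).map (netMap B σ) := by
  have h1 : (Measure.pi fun i => gaussianReal 0 ((σ i ^ 2).toNNReal))
      = (Measure.pi fun _ : Fin n => gaussianReal 0 1).map (fun g j => σ j * g j) := by
    rw [Measure.pi_map_pi (f := fun j y => σ j * y) fun i => by fun_prop]
    congr
    ext1 i
    rw [gaussianReal_map_const_mul]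
    congr 1
    · simp
    · ext; simp [sq_nonneg]
  rw [network, h1, Measure.map_map (measurable_mulVec _) (by fun_prop)]
  rfl

instance {n : ℕ} (B : Matrix (Fin n) (Fin n) ℝ) (σ : Fin n → ℝ) :
    IsProbabilityMeasure (network B σ) := by
  rw [network]
  exact Measure.isProbabilityMeasure_map (measurable_mulVec _).aemeasurable

lemma integral_sq_network {n : ℕ} {B : Matrix (Fin n) (Fin n) ℝ} {σ a c : Fin n → ℝ}
    (h : ∀ g, a ⬝ᵥ netMap B σ g = c ⬝ᵥ g) :
    Integrable (fun x => (a ⬝ᵥ x) ^ 2) (network B σ) ∧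
      ∫ x, (a ⬝ᵥ x) ^ 2 ∂network B σ = c ⬝ᵥ c := by
  have hlaw : (network B σ).map (fun x => a ⬝ᵥ x) = gaussianReal 0 (c ⬝ᵥ c).toNNReal := by
    rw [network_eq_map, Measure.map_map (by unfold dotProduct; fun_prop) (measurable_netMap B σ),
      ← map_dotProduct_pi_gaussianReal]
    congr 1
    ext g
    exact h g
  have hm : AEMeasurable (fun x => a ⬝ᵥ x) (network B σ) :=
    Measurable.aemeasurable (by unfold dotProduct; fun_prop)
  have hi : Integrable (fun y : ℝ => y ^ 2) (gaussianReal 0 (c ⬝ᵥ c).toNNReal) :=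
    (memLp_id_gaussianReal' 2 (by simp)).integrable_sq
  have hcc : 0 ≤ c ⬝ᵥ c := Finset.sum_nonneg fun i _ => mul_self_nonneg (c i)
  constructor
  · rw [← hlaw] at hi
    exact hi.comp_aemeasurable hm
  · have e := integral_map hm (f := fun y : ℝ => y ^ 2)
      (by rw [hlaw]; exact hi.aestronglyMeasurable)
    rw [← e, hlaw]
    have := variance_fun_id_gaussianReal (μ := 0) (v := (c ⬝ᵥ c).toNNReal)
    rw [variance_of_integral_eq_zero (by fun_prop) (by simp)] at this
    rw [this, Real.coe_toNNReal _ hcc]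

lemma pi_gaussianReal_eq_withDensity {ι : Type*} [Fintype ι] {v : ι → ℝ≥0} (hv : ∀ i, v i ≠ 0) :
    (Measure.pi fun i => gaussianReal 0 (v i))
      = volume.withDensity fun x : ι → ℝ =>
          ENNReal.ofReal (∏ i, gaussianPDFReal 0 (v i) (x i)) := by
  refine (Measure.pi_eq fun s hs => ?_)
  rw [withDensity_apply _ (MeasurableSet.univ_pi hs), volume_pi, Measure.restrict_pi_pi]
  have hi : ∀ i, Integrable (gaussianPDFReal 0 (v i)) ((volume : Measure ℝ).restrict (s i)) :=
    fun i => (integrable_gaussianPDFReal _ _).restrict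
  rw [← ofReal_integral_eq_lintegral_ofReal (Integrable.fintype_prod hi)
    (Filter.Eventually.of_forall fun x => Finset.prod_nonneg fun i _ =>
      gaussianPDFReal_nonneg _ _ _), integral_fintype_prod_eq_prod,
    ENNReal.ofReal_prod_of_nonneg fun i _ => integral_nonneg fun x => gaussianPDFReal_nonneg _ _ _]
  refine Finset.prod_congr rfl fun i _ => ?_
  rw [gaussianReal_apply_eq_integral _ (hv i)]

end Gaussian

/-! ### The relative entropy of two networks -/

section Networks

open Real

variable {n : ℕ} {B : Matrix (Fin n) (Fin n) ℝ}

lemma det_one_sub (hB : ∀ i j, ¬ j < i → B i j = 0) : (1 - B).det = 1 := by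
  rw [det_of_isLowerTriangular]
  · simp [hB]
  · intro i j hij
    have hij' : i < j := hij
    simp [hB i j (not_lt.2 hij'.le), hij'.ne]

lemma one_sub_mulVec_netMap (hB : ∀ i j, ¬ j < i → B i j = 0) (σ g : Fin n → ℝ) :
    (1 - B) *ᵥ netMap B σ g = fun j => σ j * g j := by
  rw [netMap, mulVec_mulVec, mul_nonsing_inv _ (by rw [det_one_sub hB]; exact isUnit_one),
    one_mulVec]

lemma network_eq_withDensity (hB : ∀ i j, ¬ j < i → B i j = 0) {σ : Fin n → ℝ}
    (hσ : ∀ i, 0 < σ i) :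
    network B σ = volume.withDensity fun x : Fin n → ℝ =>
      ENNReal.ofReal (∏ i, gaussianPDFReal 0 (σ i ^ 2).toNNReal (((1 - B) *ᵥ x) i)) := by
  have hdet : IsUnit (1 - B).det := by rw [det_one_sub hB]; exact isUnit_one
  have hdet' : ((1 - B)⁻¹).det = 1 := by
    rw [det_nonsing_inv, det_one_sub hB, Ring.inverse_one]
  have hmp : MeasurePreserving (fun x : Fin n → ℝ => (1 - B)⁻¹ *ᵥ x) volume volume := by
    refine ⟨measurable_mulVec _, ?_⟩
    have := Real.map_matrix_volume_pi_eq_smul_volume_pi (M := (1 - B)⁻¹) (by simp [hdet'])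
    rw [hdet', inv_one, abs_one, ENNReal.ofReal_one, one_smul] at this
    exact this
  have hmeas : Measurable fun x : Fin n → ℝ =>
      ENNReal.ofReal (∏ i, gaussianPDFReal 0 (σ i ^ 2).toNNReal (((1 - B) *ᵥ x) i)) := by
    refine ENNReal.measurable_ofReal.comp (Finset.measurable_prod _ fun i _ => ?_)
    exact (measurable_gaussianPDFReal _ _).comp
      ((measurable_pi_apply i).comp (measurable_mulVec (1 - B)))
  ext s hs
  rw [network, Measure.map_apply (measurable_mulVec _) hs,
    pi_gaussianReal_eq_withDensity (fun i => by simpa using (hσ i).ne'),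
    withDensity_apply _ (measurable_mulVec _ hs), withDensity_apply _ hs,
    ← hmp.setLIntegral_comp_preimage hs hmeas]
  simp only [mulVec_mulVec, mul_nonsing_inv _ hdet, one_mulVec]

lemma gaussianPDFReal_eq_mul_exp {s t : ℝ} (hs : 0 < s) (ht : 0 < t) (y z : ℝ) :
    gaussianPDFReal 0 (t ^ 2).toNNReal z = gaussianPDFReal 0 (s ^ 2).toNNReal y *
      exp (-(log (t ^ 2 / s ^ 2) / 2 - y ^ 2 / (2 * s ^ 2) + z ^ 2 / (2 * t ^ 2))) := by
  have e1 : log (t ^ 2 / s ^ 2) / 2 = log (t / s) := by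
    rw [← div_pow, log_pow]; push_cast; ring
  have e2 : exp (-log (t / s)) = s / t := by
    rw [exp_neg, exp_log (by positivity), inv_div]
  have e3 : exp (-(log (t ^ 2 / s ^ 2) / 2 - y ^ 2 / (2 * s ^ 2) + z ^ 2 / (2 * t ^ 2)))
      = (s / t) * (exp (y ^ 2 / (2 * s ^ 2)) * exp (-z ^ 2 / (2 * t ^ 2))) := by
    rw [e1, ← e2, ← exp_add, ← exp_add]; congr 1; ring
  rw [e3]
  simp only [gaussianPDFReal, Real.coe_toNNReal _ (sq_nonneg _), sub_zero]
  have e4 : exp (-y ^ 2 / (2 * s ^ 2)) * exp (y ^ 2 / (2 * s ^ 2)) = 1 := by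
    rw [← exp_add]; simp [neg_div]
  have e5 : ∀ r : ℝ, 0 < r → √(2 * Real.pi * r ^ 2) = √(2 * Real.pi) * r := fun r hr => by
    rw [Real.sqrt_mul (by positivity), Real.sqrt_sq hr.le]
  rw [e5 s hs, e5 t ht]
  calc _ = (√(2 * Real.pi) * t)⁻¹ * exp (-z ^ 2 / (2 * t ^ 2)) * 1 := by ring
    _ = _ := by
      rw [← e4]
      field_simp

/-- A bound on the total variation distance of two networks by their relative entropy. Here
`c i` is the residual of node `i` under the second network, as a linear function of the standard
Gaussian vector that drives the first one. -/
theorem dTV_network_le {B' : Matrix (Fin n) (Fin n) ℝ} {σ σ' : Fin n → ℝ}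
    (hB : ∀ i j, ¬ j < i → B i j = 0) (hB' : ∀ i j, ¬ j < i → B' i j = 0)
    (hσ : ∀ i, 0 < σ i) (hσ' : ∀ i, 0 < σ' i) {c : Fin n → Fin n → ℝ}
    (hc : ∀ i g, ((1 - B') *ᵥ netMap B σ g) i = c i ⬝ᵥ g) {ε : ℝ} (hε : 0 ≤ ε)
    (h : ∑ i, (log (σ' i ^ 2 / σ i ^ 2) + (c i ⬝ᵥ c i) / σ' i ^ 2 - 1) / 2 ≤ ε ^ 2) :
    dTV (network B σ) (network B' σ') ≤ ε := by
  let z : Fin n → (Fin n → ℝ) → ℝ := fun i x => log (σ' i ^ 2 / σ i ^ 2) / 2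
    - ((1 - B) i ⬝ᵥ x) ^ 2 / (2 * σ i ^ 2) + ((1 - B') i ⬝ᵥ x) ^ 2 / (2 * σ' i ^ 2)
  have hm : ∀ i, Measurable (z i) := fun i => by
    simp only [z, dotProduct]; fun_prop
  have h1 : ∀ i, Integrable (fun x => ((1 - B) i ⬝ᵥ x) ^ 2) (network B σ) ∧
      ∫ x, ((1 - B) i ⬝ᵥ x) ^ 2 ∂network B σ = σ i ^ 2 := fun i => by
    have := integral_sq_network (B := B) (σ := σ) (a := (1 - B) i) (c := Pi.single i (σ i))
      (fun g => by
        have := congrFun (one_sub_mulVec_netMap hB σ g) i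
        simp only [mulVec] at this
        rw [this, single_dotProduct])
    simpa [sq] using this
  have h2 := fun i => integral_sq_network (B := B) (σ := σ) (a := (1 - B') i) (c := c i) (hc i)
  have hi : ∀ i, Integrable (z i) (network B σ) := fun i =>
    ((integrable_const _).sub ((h1 i).1.div_const _)).add ((h2 i).1.div_const _)
  have hval : ∀ i, ∫ x, z i x ∂network B σ
      = (log (σ' i ^ 2 / σ i ^ 2) + (c i ⬝ᵥ c i) / σ' i ^ 2 - 1) / 2 := fun i => by
    have hi' : Integrable (fun x => log (σ' i ^ 2 / σ i ^ 2) / 2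
        - ((1 - B) i ⬝ᵥ x) ^ 2 / (2 * σ i ^ 2)) (network B σ) :=
      (integrable_const _).sub ((h1 i).1.div_const _)
    simp only [z]
    rw [integral_add hi' ((h2 i).1.div_const _),
      integral_sub (integrable_const _) ((h1 i).1.div_const _), integral_const,
      probReal_univ, one_smul, integral_div, integral_div, (h1 i).2, (h2 i).2]
    have := (hσ i).ne'
    have := (hσ' i).ne'
    field_simp
    ring
  refine dTV_le_of_integral_le (Z := fun x => ∑ i, z i x) (Finset.measurable_sum _ fun i _ => hm i)
    (integrable_finsetSum _ fun i _ => hi i) ?_ hε ?_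
  · rw [network_eq_withDensity hB hσ, network_eq_withDensity hB' hσ', ← withDensity_mul]
    · congr 1
      ext x
      rw [Pi.mul_apply, ← ENNReal.ofReal_mul
        (Finset.prod_nonneg fun i _ => gaussianPDFReal_nonneg _ _ _), ← Finset.sum_neg_distrib,
        exp_sum, ← Finset.prod_mul_distrib]
      congr 1
      exact Finset.prod_congr rfl fun i _ => gaussianPDFReal_eq_mul_exp (hσ i) (hσ' i) _ _
    · refine ENNReal.measurable_ofReal.comp (Finset.measurable_prod _ fun i _ => ?_)
      exact (measurable_gaussianPDFReal _ _).comp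
        ((measurable_pi_apply i).comp (measurable_mulVec (1 - B)))
    · exact ENNReal.measurable_ofReal.comp
        (measurable_exp.comp (Finset.measurable_sum _ fun i _ => hm i).neg)
  · rw [integral_finsetSum _ fun i _ => hi i]
    simpa only [hval] using h

end Networks

/-! ### Concentration of Gaussian quadratic forms -/

section ChiSquare

open Real

/-- The exponential moments of the centred square of a standard Gaussian variable. -/
lemma integral_exp_sq_gaussianReal {t : ℝ} (ht : t < 1 / 2) :
    Integrable (fun y => exp (t * (y ^ 2 - 1))) (gaussianReal 0 1) ∧
      ∫ y, exp (t * (y ^ 2 - 1)) ∂gaussianReal 0 1 = exp (-log (1 - 2 * t) / 2 - t) := by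
  have hb : 0 < 1 / 2 - t := by linarith
  have e : ∀ y : ℝ, gaussianPDFReal 0 1 y * exp (t * (y ^ 2 - 1))
      = ((√(2 * Real.pi))⁻¹ * exp (-t)) * exp (-(1 / 2 - t) * y ^ 2) := by
    intro y
    simp only [gaussianPDFReal, NNReal.coe_one, mul_one, sub_zero, mul_assoc, ← exp_add]
    congr 2; ring
  constructor
  · rw [gaussianReal_of_var_ne_zero _ one_ne_zero,
      integrable_withDensity_iff (by fun_prop) (Filter.Eventually.of_forall fun x => by
        simp [gaussianPDF])]
    simp only [toReal_gaussianPDF, mul_comm _ (gaussianPDFReal 0 1 _), e]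
    exact (integrable_exp_neg_mul_sq hb).const_mul _
  · rw [integral_gaussianReal_eq_integral_smul one_ne_zero]
    simp only [smul_eq_mul, e]
    rw [integral_const_mul, integral_gaussian]
    have h1 : exp (-log (1 - 2 * t) / 2) = (√(1 - 2 * t))⁻¹ := by
      rw [neg_div, exp_neg, ← log_sqrt (by linarith), exp_log (sqrt_pos.2 (by linarith))]
    have h2 : √(Real.pi / (1 / 2 - t)) = √(2 * Real.pi) * (√(1 - 2 * t))⁻¹ := by
      rw [← sqrt_inv, ← sqrt_mul (by positivity)]
      congr 1
      have : (1 - 2 * t) ≠ 0 := by linarith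
      field_simp
    rw [sub_eq_add_neg (-log (1 - 2 * t) / 2) t, exp_add, h1, h2]
    have := (sqrt_pos.2 (by positivity : (0 : ℝ) < 2 * Real.pi)).ne'
    field_simp

/-- The centred sum of squares. -/
noncomputable def chi {M : ℕ} (y : Fin M → ℝ) : ℝ := ∑ s, (y s ^ 2 - 1)

@[fun_prop]
lemma measurable_chi {M : ℕ} : Measurable (chi (M := M)) := by
  unfold chi; fun_prop

lemma integral_exp_chi {M : ℕ} {t : ℝ} (ht : t < 1 / 2) :
    Integrable (fun y : Fin M → ℝ => exp (t * chi y)) (Measure.pi fun _ => gaussianReal 0 1) ∧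
      ∫ y : Fin M → ℝ, exp (t * chi y) ∂(Measure.pi fun _ => gaussianReal 0 1)
        = exp (M * (-log (1 - 2 * t) / 2 - t)) := by
  have e : ∀ y : Fin M → ℝ, exp (t * chi y) = ∏ s, exp (t * (y s ^ 2 - 1)) := fun y => by
    rw [chi, Finset.mul_sum, exp_sum]
  simp only [e]
  obtain ⟨h1, h2⟩ := integral_exp_sq_gaussianReal ht
  refine ⟨Integrable.fintype_prod fun _ => h1, ?_⟩
  rw [integral_fintype_prod_eq_prod (fun _ y => exp (t * (y ^ 2 - 1))), Finset.prod_const, h2,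
    ← exp_nat_mul]
  simp

lemma neg_log_one_sub_le {t : ℝ} (ht : t ≤ 1 / 4) : -log (1 - 2 * t) / 2 - t ≤ 4 * t ^ 2 := by
  have h0 : 0 < 1 - 2 * t := by linarith
  have h := one_sub_inv_le_log_of_pos h0
  have h2 : 1 - (1 - 2 * t)⁻¹ ≥ -2 * t - 8 * t ^ 2 := by
    rw [ge_iff_le, le_sub_comm, inv_le_iff_one_le_mul₀ h0]
    nlinarith [sq_nonneg t, mul_nonneg (sq_nonneg t) (by linarith : 0 ≤ 1 - 4 * t)]
  linarith

lemma le_neg_log_one_sub {t : ℝ} (ht0 : 0 ≤ t) (ht : t < 1 / 2) :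
    t ^ 2 ≤ -log (1 - 2 * t) / 2 - t := by
  have h := hasSum_pow_div_log_of_abs_lt_one (x := 2 * t) (by rw [abs_of_nonneg] <;> linarith)
  have h2 := sum_le_hasSum (Finset.range 2) (fun i _ => by positivity) h
  norm_num [Finset.sum_range_succ] at h2
  nlinarith

lemma integral_exp_chi_le {M : ℕ} {t : ℝ} (ht : t ≤ 1 / 4) :
    ∫ y : Fin M → ℝ, exp (t * chi y) ∂(Measure.pi fun _ => gaussianReal 0 1)
      ≤ exp (M * (4 * t ^ 2)) := by
  rw [(integral_exp_chi (by linarith)).2, exp_le_exp]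
  exact mul_le_mul_of_nonneg_left (neg_log_one_sub_le ht) (Nat.cast_nonneg M)

lemma measure_chi_ge_le {M : ℕ} {t : ℝ} (ht0 : 0 ≤ t) (ht : t ≤ 1 / 4) (x : ℝ) :
    (Measure.pi fun _ : Fin M => gaussianReal 0 1).real {y | x ≤ chi y}
      ≤ exp (-t * x + M * (4 * t ^ 2)) := by
  refine (measure_ge_le_exp_mul_mgf x ht0 (integral_exp_chi (by linarith)).1).trans ?_
  rw [exp_add]
  exact mul_le_mul_of_nonneg_left (integral_exp_chi_le ht) (exp_pos _).le

lemma measure_chi_le_le {M : ℕ} {t : ℝ} (ht0 : 0 ≤ t) (x : ℝ) :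
    (Measure.pi fun _ : Fin M => gaussianReal 0 1).real {y | chi y ≤ -x}
      ≤ exp (-t * x + M * (4 * t ^ 2)) := by
  refine (measure_le_le_exp_mul_mgf (-x) (t := -t) (by linarith)
    (integral_exp_chi (by linarith)).1).trans ?_
  rw [exp_add]
  refine mul_le_mul (by rw [exp_le_exp]; linarith) ?_ mgf_nonneg (exp_pos _).le
  have := integral_exp_chi_le (M := M) (t := -t) (by linarith)
  rwa [neg_sq] at this

lemma measure_abs_chi_le {M : ℕ} {τ : ℝ} (hτ0 : 0 ≤ τ) (hτ : τ ≤ 1) :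
    (Measure.pi fun _ : Fin M => gaussianReal 0 1).real {y | τ * M ≤ |chi y|}
      ≤ 2 * exp (-(M * τ ^ 2 / 16)) := by
  have h1 := measure_chi_ge_le (M := M) (t := τ / 8) (by linarith) (by linarith) (τ * M)
  have h2 := measure_chi_le_le (M := M) (t := τ / 8) (by linarith) (τ * M)
  have e : -(τ / 8) * (τ * M) + M * (4 * (τ / 8) ^ 2) = -(M * τ ^ 2 / 16) := by ring
  rw [e] at h1 h2
  have h3 : {y : Fin M → ℝ | τ * M ≤ |chi y|} ⊆ {y | τ * M ≤ chi y} ∪ {y | chi y ≤ -(τ * M)} := by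
    intro y hy
    rcases le_abs.1 (show τ * M ≤ |chi y| from hy) with h | h
    · exact .inl h
    · exact .inr (by simp only [Set.mem_ofPred_eq]; linarith)
  have h4 := (measureReal_mono (μ := Measure.pi fun _ : Fin M => gaussianReal 0 1) h3).trans
    (measureReal_union_le _ _)
  linarith

end ChiSquare

/-! ### Nets -/

section Nets

open Module Metric Set
open scoped ENNReal

variable {E : Type*} [NormedAddCommGroup E] [NormedSpace ℝ E] [FiniteDimensional ℝ E]

open scoped Function in
lemma card_le_of_separated_sphere (s : Finset E) (hs : ∀ c ∈ s, ‖c‖ = 1)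
    (h : ∀ c ∈ s, ∀ d ∈ s, c ≠ d → 1 / 4 ≤ ‖c - d‖) : s.card ≤ 9 ^ finrank ℝ E := by
  borelize E
  let μ : Measure E := Measure.addHaar
  let δ : ℝ := (1 : ℝ) / 8
  let ρ : ℝ := (9 : ℝ) / 8
  have ρpos : 0 < ρ := by norm_num [ρ]
  set A := ⋃ c ∈ s, ball (c : E) δ with hA
  have D : Set.Pairwise (s : Set E) (Disjoint on fun c => ball (c : E) δ) := by
    rintro c hc d hd hcd
    apply ball_disjoint_ball
    rw [dist_eq_norm]
    refine le_trans ?_ (h c hc d hd hcd)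
    norm_num [δ]
  have A_subset : A ⊆ ball (0 : E) ρ := by
    refine iUnion₂_subset fun x hx => ?_
    apply ball_subset_ball'
    rw [dist_zero_right, hs x hx]
    norm_num [δ, ρ]
  have I :
    (s.card : ℝ≥0∞) * ENNReal.ofReal (δ ^ finrank ℝ E) * μ (ball 0 1) ≤
      ENNReal.ofReal (ρ ^ finrank ℝ E) * μ (ball 0 1) :=
    calc
      (s.card : ℝ≥0∞) * ENNReal.ofReal (δ ^ finrank ℝ E) * μ (ball 0 1) = μ A := by
        rw [hA, measure_biUnion_finset D fun c _ => measurableSet_ball]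
        have I : 0 < δ := by norm_num [δ]
        simp only [μ.addHaar_ball_of_pos _ I]
        simp only [Finset.sum_const, nsmul_eq_mul, mul_assoc]
      _ ≤ μ (ball (0 : E) ρ) := measure_mono A_subset
      _ = ENNReal.ofReal (ρ ^ finrank ℝ E) * μ (ball 0 1) := by
        simp only [μ.addHaar_ball_of_pos _ ρpos]
  have J : (s.card : ℝ≥0∞) * ENNReal.ofReal (δ ^ finrank ℝ E) ≤ ENNReal.ofReal (ρ ^ finrank ℝ E) :=
    (ENNReal.mul_le_mul_iff_left (measure_ball_pos _ _ zero_lt_one).ne' measure_ball_lt_top.ne).1 I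
  have K : (s.card : ℝ) ≤ (9 : ℝ) ^ finrank ℝ E := by
    have := ENNReal.toReal_le_of_le_ofReal (pow_nonneg ρpos.le _) J
    simpa [ρ, δ, div_eq_mul_inv, mul_pow] using this
  exact mod_cast K

variable (E) in
/-- The unit sphere has a `1/4`-net with at most `9 ^ dim` points. -/
lemma exists_net : ∃ N : Finset E, N.card ≤ 9 ^ finrank ℝ E ∧ (∀ y ∈ N, ‖y‖ = 1) ∧
    ∀ x : E, ‖x‖ = 1 → ∃ y ∈ N, ‖x - y‖ ≤ 1 / 4 := by
  classical
  let Good : ℕ → Prop := fun k => ∃ N : Finset E, N.card = k ∧ (∀ y ∈ N, ‖y‖ = 1) ∧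
    ∀ c ∈ N, ∀ d ∈ N, c ≠ d → 1 / 4 ≤ ‖c - d‖
  have h0 : Good 0 := ⟨∅, by simp⟩
  have hbdd : ∀ k, Good k → k ≤ 9 ^ finrank ℝ E := by
    rintro k ⟨N, rfl, h1, h2⟩
    exact card_le_of_separated_sphere N h1 h2
  obtain ⟨N, hN, h1, h2⟩ := Nat.findGreatest_spec (P := Good) (Nat.zero_le (9 ^ finrank ℝ E)) h0
  refine ⟨N, card_le_of_separated_sphere N h1 h2, h1, fun x hx => ?_⟩
  by_contra! hcon
  have hxN : x ∉ N := fun hxN => by have := hcon x hxN; norm_num at this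
  have hgood : Good (N.card + 1) := by
    refine ⟨insert x N, Finset.card_insert_of_notMem hxN, ?_, ?_⟩
    · simpa [hx] using h1
    · intro c hc d hd hcd
      rcases Finset.mem_insert.1 hc with rfl | hc' <;> rcases Finset.mem_insert.1 hd with rfl | hd'
      · exact absurd rfl hcd
      · exact (hcon d hd').le
      · rw [norm_sub_rev]; exact (hcon c hc').le
      · exact h2 c hc' d hd' hcd
  have := Nat.le_findGreatest (hbdd _ hgood) hgood
  omega

/-- A symmetric bilinear form is controlled by its values on a `1/4`-net of the sphere. -/
lemma abs_form_le_of_net {V : Type*} [NormedAddCommGroup V] [InnerProductSpace ℝ V]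
    [FiniteDimensional ℝ V] (A : V →ₗ[ℝ] V →ₗ[ℝ] ℝ) (hA : ∀ x y, A x y = A y x)
    (hcont : Continuous fun x => A x x) {N : Finset V}
    (hN : ∀ x : V, ‖x‖ = 1 → ∃ y ∈ N, ‖x - y‖ ≤ 1 / 4) (hN1 : ∀ y ∈ N, ‖y‖ = 1) {b : ℝ}
    (hb : ∀ y ∈ N, |A y y| ≤ b) (x : V) : |A x x| ≤ 2 * b * ‖x‖ ^ 2 := by
  rcases eq_or_ne x 0 with rfl | hx
  · simp
  have scale : ∀ (r : ℝ) (z : V), A (r • z) (r • z) = r ^ 2 * A z z := fun r z => by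
    simp; ring
  have hne : (sphere (0 : V) 1).Nonempty :=
    ⟨‖x‖⁻¹ • x, by simp [norm_smul, norm_ne_zero_iff.2 hx]⟩
  obtain ⟨x₀, hx₀, hmax⟩ := (isCompact_sphere (0 : V) 1).exists_isMaxOn hne
    hcont.abs.continuousOn
  have hx₀' : ‖x₀‖ = 1 := by simpa using hx₀
  set R := |A x₀ x₀| with hR
  have hall : ∀ z, |A z z| ≤ R * ‖z‖ ^ 2 := by
    intro z
    rcases eq_or_ne z 0 with rfl | hz
    · simp
    have hz' : 0 < ‖z‖ := norm_pos_iff.2 hz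
    have h1 : |A (‖z‖⁻¹ • z) (‖z‖⁻¹ • z)| ≤ R :=
      hmax (by simp [norm_smul, hz'.ne'] : ‖z‖⁻¹ • z ∈ sphere (0 : V) 1)
    rw [scale, abs_mul, abs_of_nonneg (by positivity), inv_pow,
      inv_mul_le_iff₀ (by positivity)] at h1
    linarith
  have hR0 : 0 ≤ R := abs_nonneg _
  obtain ⟨y, hy, hxy⟩ := hN x₀ hx₀'
  have hpol : ∀ z w, ‖z‖ ≤ 1 → ‖w‖ ≤ 1 → |A z w| ≤ R := by
    intro z w hz hw
    have h1 : 4 * A z w = A (z + w) (z + w) - A (z - w) (z - w) := by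
      simp [hA w z]; ring
    have h2 := hall (z + w)
    have h3 := hall (z - w)
    have h4 := parallelogram_law_with_norm ℝ z w
    have h5 : ‖z‖ ^ 2 ≤ 1 := pow_le_one₀ (norm_nonneg _) hz
    have h6 : ‖w‖ ^ 2 ≤ 1 := pow_le_one₀ (norm_nonneg _) hw
    have h7 : R * ‖z + w‖ ^ 2 + R * ‖z - w‖ ^ 2 ≤ 4 * R := by nlinarith
    rw [abs_le] at h2 h3 ⊢
    constructor <;> linarith [h2.1, h2.2, h3.1, h3.2]
  have hdiff : A x₀ x₀ - A y y = 1 / 2 * A ((4 : ℝ) • (x₀ - y)) ((1 / 2 : ℝ) • (x₀ + y)) := by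
    simp [hA y x₀]; ring
  have h1 : |A ((4 : ℝ) • (x₀ - y)) ((1 / 2 : ℝ) • (x₀ + y))| ≤ R := by
    refine hpol _ _ ?_ ?_
    · rw [norm_smul]; norm_num; linarith
    · rw [norm_smul]
      have := norm_add_le x₀ y
      rw [hx₀', hN1 y hy] at this
      norm_num; linarith
  have h2 : R ≤ b + 1 / 2 * R := by
    have : A x₀ x₀ = A y y + 1 / 2 * A ((4 : ℝ) • (x₀ - y)) ((1 / 2 : ℝ) • (x₀ + y)) := by
      linarith
    calc R = |A y y + 1 / 2 * A ((4 : ℝ) • (x₀ - y)) ((1 / 2 : ℝ) • (x₀ + y))| := by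
          rw [← this]
      _ ≤ |A y y| + 1 / 2 * |A ((4 : ℝ) • (x₀ - y)) ((1 / 2 : ℝ) • (x₀ + y))| := by
          refine (abs_add_le _ _).trans (le_of_eq ?_)
          rw [abs_mul, abs_of_nonneg (by norm_num : (0 : ℝ) ≤ 1 / 2)]
      _ ≤ b + 1 / 2 * R := add_le_add (hb y hy) (by linarith)
  refine (hall x).trans ?_
  exact mul_le_mul_of_nonneg_right (by linarith) (sq_nonneg _)

end Nets

/-! ### Uniform concentration on subspaces -/

section Isometry

open Real Module

/-- The law of `m` independent standard Gaussian vectors in `ℝⁿ`. -/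
noncomputable def stdSamples (m n : ℕ) : Measure (Fin m → Fin n → ℝ) :=
  Measure.pi fun _ => Measure.pi fun _ => gaussianReal 0 1

instance (m n : ℕ) : IsProbabilityMeasure (stdSamples m n) := by
  unfold stdSamples; infer_instance

variable {m n M : ℕ}

lemma map_dotProduct_stdSamples {e : Fin M → Fin m} (he : Function.Injective e)
    {c : Fin n → ℝ} (hc : c ⬝ᵥ c = 1) :
    (stdSamples m n).map (fun g s => c ⬝ᵥ g (e s)) = Measure.pi fun _ => gaussianReal 0 1 := by
  have hm : Measurable fun x : Fin n → ℝ => c ⬝ᵥ x := by unfold dotProduct; fun_prop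
  have h1 : iIndepFun (fun (s : Fin m) (g : Fin m → Fin n → ℝ) => c ⬝ᵥ g s) (stdSamples m n) :=
    iIndepFun_pi (X := fun _ x => c ⬝ᵥ x) fun _ => hm.aemeasurable
  have h2 := h1.precomp he
  have hm' : ∀ s, Measurable fun g : Fin m → Fin n → ℝ => c ⬝ᵥ g (e s) := fun s =>
    hm.comp (measurable_pi_apply (e s))
  rw [iIndepFun.map_fun_eq_pi_map (fun s => (hm' s).aemeasurable) h2]
  congr
  ext1 s
  have h3 := (measurePreserving_eval
    (fun _ : Fin m => Measure.pi fun _ : Fin n => gaussianReal 0 1) (e s)).map_eq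
  have h4 := map_dotProduct_pi_gaussianReal c
  rw [← h3, Measure.map_map hm (by fun_prop), hc] at h4
  rw [Real.toNNReal_one] at h4
  exact h4

/-- On the subspace `V`, the empirical second moments of the samples `g ∘ e` are within a factor
`1 ± τ` of the true ones. -/
def NearIsometry (e : Fin M → Fin m) (V : Submodule ℝ (EuclideanSpace ℝ (Fin n))) (τ : ℝ)
    (g : Fin m → Fin n → ℝ) : Prop :=
  ∀ c ∈ V, |∑ s, (c.ofLp ⬝ᵥ g (e s)) ^ 2 - M * ‖c‖ ^ 2| ≤ τ * M * ‖c‖ ^ 2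

lemma dotProduct_self_eq_norm_sq (c : EuclideanSpace ℝ (Fin n)) : c.ofLp ⬝ᵥ c.ofLp = ‖c‖ ^ 2 := by
  rw [EuclideanSpace.real_norm_sq_eq, dotProduct]
  exact Finset.sum_congr rfl fun i _ => by ring

/-- The quadratic form measuring the deviation of empirical from true second moments. -/
noncomputable def deviationForm (e : Fin M → Fin m) (g : Fin m → Fin n → ℝ)
    (V : Submodule ℝ (EuclideanSpace ℝ (Fin n))) : V →ₗ[ℝ] V →ₗ[ℝ] ℝ :=
  LinearMap.mk₂ ℝ (fun u v => ∑ s, (u.1.ofLp ⬝ᵥ g (e s)) * (v.1.ofLp ⬝ᵥ g (e s))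
      - M * (u.1.ofLp ⬝ᵥ v.1.ofLp))
    (fun u u' v => by
      simp [add_dotProduct, add_mul, Finset.sum_add_distrib, mul_add]; ring)
    (fun r u v => by
      simp [smul_dotProduct, mul_assoc, ← Finset.mul_sum, mul_sub]; ring)
    (fun u v v' => by
      simp [add_dotProduct, dotProduct_add, Finset.sum_add_distrib, mul_add]; ring)
    (fun r u v => by
      simp [smul_dotProduct, dotProduct_smul, mul_left_comm _ r, ← Finset.mul_sum, mul_sub])

lemma measure_not_nearIsometry_le {e : Fin M → Fin m} (he : Function.Injective e)
    (V : Submodule ℝ (EuclideanSpace ℝ (Fin n))) {τ : ℝ} (hτ0 : 0 ≤ τ) (hτ : τ ≤ 1) :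
    (stdSamples m n).real {g | ¬ NearIsometry e V τ g}
      ≤ 9 ^ finrank ℝ V * (2 * exp (-(M * τ ^ 2 / 64))) := by
  obtain ⟨N, hcard, hN1, hN⟩ := exists_net V
  have hsub : {g : Fin m → Fin n → ℝ | ¬ NearIsometry e V τ g} ⊆
      ⋃ y ∈ N, {g | τ / 2 * M ≤ |chi fun s => y.1.ofLp ⬝ᵥ g (e s)|} := by
    intro g hg
    by_contra hcon
    simp only [Set.mem_iUnion, Set.mem_ofPred_eq, not_exists, not_le] at hcon
    refine hg fun c hc => ?_
    have hform : ∀ u : V, deviationForm e g V u u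
        = ∑ s, (u.1.ofLp ⬝ᵥ g (e s)) ^ 2 - M * ‖u.1‖ ^ 2 := fun u => by
      simp [deviationForm, dotProduct_self_eq_norm_sq, sq]
    have := abs_form_le_of_net (deviationForm e g V)
      (fun x y => by simp [deviationForm, mul_comm, dotProduct_comm])
      (by
        simp only [hform, dotProduct]
        fun_prop) hN hN1 (b := τ / 2 * M) (fun y hy => by
        have h1 := (hcon y hy).le
        have h2 : ‖y.1‖ = 1 := hN1 y hy
        rw [hform, h2]
        simpa [chi] using h1) ⟨c, hc⟩
    rw [hform] at this
    refine this.trans (le_of_eq ?_)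
    simp only [Submodule.coe_norm]
    ring
  have hpt : ∀ y ∈ N, (stdSamples m n).real {g | τ / 2 * M ≤ |chi fun s => y.1.ofLp ⬝ᵥ g (e s)|}
      ≤ 2 * exp (-(M * τ ^ 2 / 64)) := by
    intro y hy
    have hc : y.1.ofLp ⬝ᵥ y.1.ofLp = 1 := by
      rw [dotProduct_self_eq_norm_sq, show ‖y.1‖ = 1 from hN1 y hy, one_pow]
    have h := measure_abs_chi_le (M := M) (τ := τ / 2) (by linarith) (by linarith)
    have hmeas : Measurable fun (g : Fin m → Fin n → ℝ) (s : Fin M) => y.1.ofLp ⬝ᵥ g (e s) := by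
      unfold dotProduct; fun_prop
    rw [← map_dotProduct_stdSamples he hc, map_measureReal_apply hmeas
      (measurableSet_le (by fun_prop) (by fun_prop))] at h
    refine h.trans (le_of_eq ?_)
    congr 2; ring
  calc (stdSamples m n).real {g | ¬ NearIsometry e V τ g}
      ≤ (stdSamples m n).real (⋃ y ∈ N, {g | τ / 2 * M ≤ |chi fun s => y.1.ofLp ⬝ᵥ g (e s)|}) :=
        measureReal_mono hsub (measure_ne_top _ _)
    _ ≤ ∑ y ∈ N, (stdSamples m n).real {g | τ / 2 * M ≤ |chi fun s => y.1.ofLp ⬝ᵥ g (e s)|} :=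
        measureReal_biUnion_finset_le _ _
    _ ≤ ∑ y ∈ N, 2 * exp (-(M * τ ^ 2 / 64)) := Finset.sum_le_sum hpt
    _ = N.card * (2 * exp (-(M * τ ^ 2 / 64))) := by simp
    _ ≤ 9 ^ finrank ℝ V * (2 * exp (-(M * τ ^ 2 / 64))) := by
        refine mul_le_mul_of_nonneg_right ?_ (by positivity)
        exact_mod_cast hcard

end Isometry

/-! ### The estimation error on well-conditioned samples -/

section Error

open Module

variable {m n : ℕ} {π : Fin n → Finset (Fin n)} {B : Matrix (Fin n) (Fin n) ℝ} {σ : Fin n → ℝ}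

/-- The value of node `j` as a linear function of the standard Gaussian noise. -/
noncomputable def rowVec (B : Matrix (Fin n) (Fin n) ℝ) (σ : Fin n → ℝ) (j : Fin n) :
    Fin n → ℝ := fun k => (1 - B)⁻¹ j k * σ k

lemma netMap_apply (g : Fin n → ℝ) (j : Fin n) : netMap B σ g j = rowVec B σ j ⬝ᵥ g := by
  simp only [netMap, mulVec, dotProduct, rowVec]
  exact Finset.sum_congr rfl fun k _ => by ring

lemma rowVec_apply_eq_zero (hB : ∀ i j, ¬ j < i → B i j = 0) {i j : Fin n} (hij : j < i) :
    rowVec B σ j i = 0 := by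
  have hdet : IsUnit (1 - B).det := by rw [det_one_sub hB]; exact isUnit_one
  have hT : (1 - B).IsLowerTriangular := by
    intro i j hij
    have hij' : i < j := hij
    simp [hB i j (not_lt.2 hij'.le), hij'.ne]
  have : Invertible (1 - B) := invertibleOfIsUnitDet _ hdet
  have h := blockTriangular_inv_of_blockTriangular hT
  have : (1 - B)⁻¹ j i = 0 := h (i := j) (j := i) hij
  simp [rowVec, this]

lemma sum_mul_rowVec_eq_zero (hB : ∀ i j, ¬ j < i → B i j = 0) (hσ : ∀ i, 0 < σ i) {i : Fin n}
    {v : {j // j ∈ π i} → ℝ} (h : ∑ l, v l • rowVec B σ l.1 = 0) : v = 0 := by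
  have hdet : IsUnit ((1 - B)⁻¹ * diagonal σ) := by
    rw [Matrix.isUnit_iff_isUnit_det, det_mul, det_nonsing_inv, det_one_sub hB, det_diagonal]
    simpa [Finset.prod_eq_zero_iff] using fun i => (hσ i).ne'
  have hli := Matrix.linearIndependent_rows_of_isUnit hdet
  have hli' := hli.comp (Subtype.val : {j // j ∈ π i} → Fin n) Subtype.val_injective
  have hrow : ∀ l : {j // j ∈ π i}, ((1 - B)⁻¹ * diagonal σ).row l.1 = rowVec B σ l.1 := by
    intro l
    ext k
    simp [rowVec, Matrix.row, mul_diagonal]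
  ext l
  refine Fintype.linearIndependent_iff.1 hli' v ?_ l
  simpa only [Function.comp, hrow] using h

lemma netMap_eq_sum (hB : ∀ i j, ¬ j < i → B i j = 0) (hπ : ∀ i j, j ∉ π i → B i j = 0)
    (g : Fin n → ℝ) (i : Fin n) :
    netMap B σ g i = ∑ l : {j // j ∈ π i}, B i l.1 * netMap B σ g l.1 + σ i * g i := by
  have h := congrFun (one_sub_mulVec_netMap hB σ g) i
  rw [sub_mulVec, one_mulVec, Pi.sub_apply] at h
  have h2 : (B *ᵥ netMap B σ g) i = ∑ l : {j // j ∈ π i}, B i l.1 * netMap B σ g l.1 := by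
    rw [mulVec, dotProduct, Finset.sum_coe_sort (π i) (fun l => B i l * netMap B σ g l)]
    symm
    refine Finset.sum_subset (Finset.subset_univ _) fun j _ hj => ?_
    rw [hπ i j hj, zero_mul]
  linarith

/-- The error of the estimated coefficients of node `i`, as a linear function of the noise. -/
noncomputable def errVec (π : Fin n → Finset (Fin n)) (B : Matrix (Fin n) (Fin n) ℝ)
    (σ : Fin n → ℝ) (ω : Fin m → Fin n → ℝ) (i : Fin n) : Fin n → ℝ :=
  ∑ l : {j // j ∈ π i}, (coefEst π ω i l - B i l.1) • rowVec B σ l.1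

/-- The residual of node `i` for the estimated coefficients, as a linear function of the noise. -/
noncomputable def residVec (π : Fin n → Finset (Fin n)) (B : Matrix (Fin n) (Fin n) ℝ)
    (σ : Fin n → ℝ) (ω : Fin m → Fin n → ℝ) (i : Fin n) : Fin n → ℝ :=
  σ i • Pi.single i 1 - errVec π B σ ω i

lemma residual_eq (hB : ∀ i j, ¬ j < i → B i j = 0) (hπ : ∀ i j, j ∉ π i → B i j = 0)
    (ω : Fin m → Fin n → ℝ) (i : Fin n) (g : Fin n → ℝ) :
    netMap B σ g i - ∑ l : {j // j ∈ π i}, coefEst π ω i l * netMap B σ g l.1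
      = residVec π B σ ω i ⬝ᵥ g := by
  rw [residVec, errVec, sub_dotProduct, smul_dotProduct, single_dotProduct, sum_dotProduct,
    netMap_eq_sum hB hπ g i]
  simp only [smul_dotProduct, ← netMap_apply, smul_eq_mul, sub_mul, Finset.sum_sub_distrib]
  ring

lemma one_sub_coefMatrix_mulVec (hB : ∀ i j, ¬ j < i → B i j = 0)
    (hπ : ∀ i j, j ∉ π i → B i j = 0) (ω : Fin m → Fin n → ℝ) (i : Fin n) (g : Fin n → ℝ) :
    ((1 - coefMatrix π ω) *ᵥ netMap B σ g) i = residVec π B σ ω i ⬝ᵥ g := by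
  rw [← residual_eq hB hπ, sub_mulVec, one_mulVec, Pi.sub_apply]
  congr 1
  rw [mulVec, dotProduct, ← Finset.sum_subset (Finset.subset_univ (π i)), ← Finset.sum_coe_sort]
  · exact Finset.sum_congr rfl fun l _ => by simp [coefMatrix]
  · intro j _ hj
    simp [coefMatrix, hj]

/-- The positions of the first half of the samples. -/
def firstIdx (m : ℕ) (s : Fin (m / 2)) : Fin m :=
  ⟨s.1, lt_of_lt_of_le s.2 (Nat.div_le_self m 2)⟩

/-- The positions of the second half of the samples. -/
def secondIdx (m : ℕ) (s : Fin (m - m / 2)) : Fin m := ⟨m / 2 + s.1, by omega⟩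

lemma firstIdx_injective : Function.Injective (firstIdx m) := fun a b h => by
  simpa [firstIdx, Fin.ext_iff] using h

lemma secondIdx_injective : Function.Injective (secondIdx m) := fun a b h => by
  simpa [secondIdx, Fin.ext_iff] using h

lemma varEst_eq (hB : ∀ i j, ¬ j < i → B i j = 0) (hπ : ∀ i j, j ∉ π i → B i j = 0)
    (g : Fin m → Fin n → ℝ) (i : Fin n) :
    varEst π (fun s => netMap B σ (g s)) i = (1 / ((m - m / 2 : ℕ) : ℝ)) *
      ∑ s, (residVec π B σ (fun s => netMap B σ (g s)) i ⬝ᵥ g (secondIdx m s)) ^ 2 := by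
  rw [varEst]
  congr 1
  refine Finset.sum_congr rfl fun s _ => ?_
  rw [← residual_eq hB hπ]
  rfl

/-- The span of the noise of node `i` and of the values of its parents. -/
noncomputable def nodeSpan (π : Fin n → Finset (Fin n)) (B : Matrix (Fin n) (Fin n) ℝ)
    (σ : Fin n → ℝ) (i : Fin n) : Submodule ℝ (EuclideanSpace ℝ (Fin n)) :=
  Submodule.span ℝ (((insert (WithLp.toLp 2 (Pi.single i 1))
    ((π i).image fun j => WithLp.toLp 2 (rowVec B σ j))) :
      Finset (EuclideanSpace ℝ (Fin n))) : Set (EuclideanSpace ℝ (Fin n)))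

lemma finrank_nodeSpan_le (i : Fin n) : finrank ℝ (nodeSpan π B σ i) ≤ (π i).card + 1 := by
  refine (finrank_span_finset_le_card _).trans ((Finset.card_insert_le _ _).trans ?_)
  exact Nat.add_le_add_right Finset.card_image_le 1

lemma single_mem_nodeSpan (i : Fin n) :
    WithLp.toLp 2 (Pi.single i (1 : ℝ)) ∈ nodeSpan π B σ i :=
  Submodule.subset_span (Finset.mem_coe.2 (Finset.mem_insert_self _ _))

lemma sum_rowVec_mem_nodeSpan (i : Fin n) (v : {j // j ∈ π i} → ℝ) :
    WithLp.toLp 2 (∑ l, v l • rowVec B σ l.1) ∈ nodeSpan π B σ i := by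
  rw [WithLp.toLp_sum]
  refine Submodule.sum_mem _ fun l _ => ?_
  rw [WithLp.toLp_smul]
  refine Submodule.smul_mem _ _ (Submodule.subset_span (Finset.mem_coe.2 ?_))
  exact Finset.mem_insert_of_mem (Finset.mem_image_of_mem _ l.2)

lemma NearIsometry.dev_le {M : ℕ} {e : Fin M → Fin m}
    {V : Submodule ℝ (EuclideanSpace ℝ (Fin n))} {τ : ℝ} {g : Fin m → Fin n → ℝ}
    (h : NearIsometry e V τ g) {c : Fin n → ℝ} (hc : WithLp.toLp 2 c ∈ V) :
    |∑ s, (c ⬝ᵥ g (e s)) ^ 2 - M * (c ⬝ᵥ c)| ≤ τ * M * (c ⬝ᵥ c) := by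
  have := h _ hc
  rwa [← dotProduct_self_eq_norm_sq] at this

lemma dotProduct_self_nonneg' (c : Fin n → ℝ) : 0 ≤ c ⬝ᵥ c :=
  Finset.sum_nonneg fun i _ => mul_self_nonneg (c i)

/-- The normal equations force the error to be small when the samples are nearly isometric. -/
lemma NearIsometry.normSq_le {M : ℕ} {e : Fin M → Fin m}
    {V : Submodule ℝ (EuclideanSpace ℝ (Fin n))} {τ s : ℝ} {g : Fin m → Fin n → ℝ}
    (h : NearIsometry e V τ g) (hM : 0 < M) (hτ0 : 0 < τ) (hτ : τ ≤ 1 / 2) (hs : 0 < s)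
    {u w : Fin n → ℝ} (hu : WithLp.toLp 2 u ∈ V) (hw : WithLp.toLp 2 w ∈ V) (huw : u ⬝ᵥ w = 0)
    (hw1 : w ⬝ᵥ w = 1)
    (hn : ∑ k, (u ⬝ᵥ g (e k)) * ((s • w - u) ⬝ᵥ g (e k)) = 0) :
    u ⬝ᵥ u ≤ 4 * τ ^ 2 * s ^ 2 := by
  have hM' : (0 : ℝ) < M := by exact_mod_cast hM
  set α := 2 * τ * s with hα
  have hα0 : 0 < α := by positivity
  have hwu : w ⬝ᵥ u = 0 := by rw [dotProduct_comm, huw]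
  have h1 := h.dev_le hu
  have h2 := h.dev_le (c := u + α • w) (by
    rw [WithLp.toLp_add, WithLp.toLp_smul]; exact V.add_mem hu (V.smul_mem _ hw))
  have h3 := h.dev_le (c := u - α • w) (by
    rw [WithLp.toLp_sub, WithLp.toLp_smul]; exact V.sub_mem hu (V.smul_mem _ hw))
  have e2 : (u + α • w) ⬝ᵥ (u + α • w) = u ⬝ᵥ u + α ^ 2 := by
    simp [add_dotProduct, dotProduct_add, huw, hwu, hw1]; ring
  have e3 : (u - α • w) ⬝ᵥ (u - α • w) = u ⬝ᵥ u + α ^ 2 := by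
    simp [sub_dotProduct, dotProduct_sub, huw, hwu, hw1]; ring
  have e4 : ∑ k, ((u + α • w) ⬝ᵥ g (e k)) ^ 2 - ∑ k, ((u - α • w) ⬝ᵥ g (e k)) ^ 2
      = 4 * α * ∑ k, (u ⬝ᵥ g (e k)) * (w ⬝ᵥ g (e k)) := by
    rw [← Finset.sum_sub_distrib, Finset.mul_sum]
    refine Finset.sum_congr rfl fun k _ => ?_
    simp only [add_dotProduct, sub_dotProduct, smul_dotProduct, smul_eq_mul]
    ring
  have e5 : ∑ k, (u ⬝ᵥ g (e k)) ^ 2 = s * ∑ k, (u ⬝ᵥ g (e k)) * (w ⬝ᵥ g (e k)) := by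
    rw [← sub_eq_zero, ← neg_eq_zero, ← hn, Finset.mul_sum, ← Finset.sum_sub_distrib,
      ← Finset.sum_neg_distrib]
    refine Finset.sum_congr rfl fun k _ => ?_
    simp only [sub_dotProduct, smul_dotProduct, smul_eq_mul]
    ring
  rw [e2] at h2
  rw [e3] at h3
  rw [abs_le] at h1 h2 h3
  set T := ∑ k, (u ⬝ᵥ g (e k)) * (w ⬝ᵥ g (e k)) with hT
  have hq : 4 * α * T ≤ 2 * (τ * M * (u ⬝ᵥ u + α ^ 2)) := by linarith [h2.2, h3.1]
  have hu0 := dotProduct_self_nonneg' u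
  have hT' : 8 * (s * T) ≤ 2 * (M * (u ⬝ᵥ u + α ^ 2)) := by
    have : τ * (8 * (s * T)) ≤ τ * (2 * (M * (u ⬝ᵥ u + α ^ 2))) := by
      rw [hα] at hq ⊢; linarith
    exact le_of_mul_le_mul_left this hτ0
  have hlow : (1 - τ) * M * (u ⬝ᵥ u) ≤ s * T := by
    rw [← e5]; linarith [h1.1]
  have hlow' : (1 / 2) * M * (u ⬝ᵥ u) ≤ s * T :=
    le_trans (mul_le_mul_of_nonneg_right (mul_le_mul_of_nonneg_right (by linarith) hM'.le) hu0) hlow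
  have : M * (u ⬝ᵥ u) ≤ M * α ^ 2 := by linarith
  have := le_of_mul_le_mul_left this hM'
  rw [hα] at this
  linarith

lemma isUnit_gram_of_nearIsometry (hB : ∀ i j, ¬ j < i → B i j = 0) (hσ : ∀ i, 0 < σ i)
    {τ : ℝ} (hτ : τ ≤ 1 / 2) (hm : 2 ≤ m) {g : Fin m → Fin n → ℝ} {i : Fin n}
    (h : NearIsometry (firstIdx m) (nodeSpan π B σ i) τ g) :
    IsUnit (gram π (fun s => netMap B σ (g s)) i) := by
  rw [isUnit_gram_iff]
  intro v hv
  refine sum_mul_rowVec_eq_zero hB hσ (π := π) (i := i) ?_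
  set u := ∑ l : {j // j ∈ π i}, v l • rowVec B σ l.1 with hu
  have h1 := h.dev_le (sum_rowVec_mem_nodeSpan i v)
  rw [← hu] at h1
  have h2 : ∀ s, u ⬝ᵥ g (firstIdx m s) = 0 := fun s => by
    rw [← hv s, hu, sum_dotProduct]
    refine Finset.sum_congr rfl fun l _ => ?_
    rw [smul_dotProduct, ← netMap_apply, smul_eq_mul]
    rfl
  simp only [h2] at h1
  have hM : (0 : ℝ) < (m / 2 : ℕ) := by
    have : 0 < m / 2 := by omega
    exact_mod_cast this
  have hu0 := dotProduct_self_nonneg' u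
  rw [abs_le] at h1
  have h3 := h1.1
  simp only [ne_eq, OfNat.ofNat_ne_zero, not_false_eq_true, zero_pow, Finset.sum_const_zero] at h3
  have : u ⬝ᵥ u ≤ 0 := by
    by_contra! hpos
    have : 0 < ((m / 2 : ℕ) : ℝ) * (u ⬝ᵥ u) := mul_pos hM hpos
    nlinarith
  exact dotProduct_self_eq_zero.1 (le_antisymm this hu0)

lemma errVec_dotProduct_single (hB : ∀ i j, ¬ j < i → B i j = 0)
    (hlt : ∀ i, ∀ j ∈ π i, j < i) (ω : Fin m → Fin n → ℝ) (i : Fin n) :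
    errVec π B σ ω i ⬝ᵥ Pi.single i 1 = 0 := by
  rw [dotProduct_single, errVec, Finset.sum_apply, mul_one]
  exact Finset.sum_eq_zero fun l _ => by
    simp [rowVec_apply_eq_zero hB (hlt i l.1 l.2)]

lemma residVec_dotProduct_self (hB : ∀ i j, ¬ j < i → B i j = 0)
    (hlt : ∀ i, ∀ j ∈ π i, j < i) (ω : Fin m → Fin n → ℝ) (i : Fin n) :
    residVec π B σ ω i ⬝ᵥ residVec π B σ ω i
      = σ i ^ 2 + errVec π B σ ω i ⬝ᵥ errVec π B σ ω i := by
  have h1 := errVec_dotProduct_single (σ := σ) hB hlt ω i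
  have h2 : Pi.single i 1 ⬝ᵥ errVec π B σ ω i = 0 := by rw [dotProduct_comm, h1]
  simp only [residVec, sub_dotProduct, dotProduct_sub, smul_dotProduct, dotProduct_smul, h1, h2,
    smul_eq_mul, mul_zero, sub_zero, zero_sub, single_dotProduct, Pi.single_eq_same]
  ring

lemma errVec_normSq_le (hB : ∀ i j, ¬ j < i → B i j = 0) (hπ : ∀ i j, j ∉ π i → B i j = 0)
    (hlt : ∀ i, ∀ j ∈ π i, j < i) (hσ : ∀ i, 0 < σ i)
    {τ : ℝ} (hτ0 : 0 < τ) (hτ : τ ≤ 1 / 2) (hm : 2 ≤ m) {g : Fin m → Fin n → ℝ} {i : Fin n}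
    (h : NearIsometry (firstIdx m) (nodeSpan π B σ i) τ g) :
    errVec π B σ (fun s => netMap B σ (g s)) i ⬝ᵥ errVec π B σ (fun s => netMap B σ (g s)) i
      ≤ 4 * τ ^ 2 * σ i ^ 2 := by
  set ω : Fin m → Fin n → ℝ := fun s => netMap B σ (g s) with hω
  refine h.normSq_le (by omega) hτ0 hτ (hσ i) (sum_rowVec_mem_nodeSpan i _)
    (single_mem_nodeSpan i) (errVec_dotProduct_single hB hlt ω i) (by simp) ?_
  have hn := (eq_coefEst_iff (isUnit_gram_of_nearIsometry hB hσ hτ hm h) _).1 rfl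
  have hn' : ∀ j : {j // j ∈ π i}, ∑ s, (rowVec B σ j.1 ⬝ᵥ g (firstIdx m s))
      * (residVec π B σ ω i ⬝ᵥ g (firstIdx m s)) = 0 := fun j => by
    rw [← hn j]
    refine Finset.sum_congr rfl fun s _ => ?_
    rw [← residual_eq hB hπ, ← netMap_apply]
    rfl
  have : ∀ k, errVec π B σ ω i ⬝ᵥ g (firstIdx m k)
      = ∑ l : {j // j ∈ π i}, (coefEst π ω i l - B i l.1) * (rowVec B σ l.1 ⬝ᵥ g (firstIdx m k)) :=
    fun k => by
      rw [errVec, sum_dotProduct]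
      simp only [smul_dotProduct, smul_eq_mul]
  simp only [this, Finset.sum_mul]
  rw [Finset.sum_comm]
  refine Finset.sum_eq_zero fun l _ => ?_
  simp only [mul_assoc, ← Finset.mul_sum]
  have := hn' l
  simp only [residVec] at this
  rw [this, mul_zero]

lemma log_add_inv_sub_one_le {w : ℝ} (hw : 0 < w) : Real.log w + 1 / w - 1 ≤ (w - 1) ^ 2 / w := by
  have h := Real.log_le_sub_one_of_pos hw
  have : (w - 1) ^ 2 / w = (w - 1) + (1 / w - 1) := by field_simp; ring
  linarith

/-- The relative entropy contributed by a node with error `D` and variance estimate `v`. -/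
lemma entropy_le {s D w v : ℝ} (hs : 0 < s) (hD : 0 ≤ D) (hw : 0 < w)
    (hv : v = w * (s ^ 2 + D)) :
    (Real.log (v / s ^ 2) + (s ^ 2 + D) / v - 1) / 2 ≤ (D / s ^ 2 + (w - 1) ^ 2 / w) / 2 := by
  have h1 : v / s ^ 2 = w * (1 + D / s ^ 2) := by rw [hv]; field_simp
  have h2 : (s ^ 2 + D) / v = 1 / w := by
    have : s ^ 2 + D ≠ 0 := by positivity
    rw [hv]; field_simp
  have h3 : 0 < 1 + D / s ^ 2 := by positivity
  rw [h1, h2, Real.log_mul hw.ne' h3.ne']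
  have := Real.log_le_sub_one_of_pos h3
  have := log_add_inv_sub_one_le hw
  linarith

/-- The estimator succeeds on the data set `ω`. -/
def Success (π : Fin n → Finset (Fin n)) (B : Matrix (Fin n) (Fin n) ℝ) (σ : Fin n → ℝ) (ε : ℝ)
    (ω : Fin m → Fin n → ℝ) : Prop :=
  (∀ i, IsUnit (gram π ω i)) ∧ (∀ i, 0 < sdEst π ω i) ∧
    dTV (network B σ) (network (coefMatrix π ω) (sdEst π ω)) ≤ ε

/-- The estimator succeeds if the relative errors `D i` and `w i - 1` of the estimates are
small. -/
lemma success_of_errors (hB : ∀ i j, ¬ j < i → B i j = 0) (hπ : ∀ i j, j ∉ π i → B i j = 0)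
    (hlt : ∀ i, ∀ j ∈ π i, j < i) (hσ : ∀ i, 0 < σ i) {ε : ℝ} (hε : 0 ≤ ε)
    {g : Fin m → Fin n → ℝ} (hgram : ∀ i, IsUnit (gram π (fun s => netMap B σ (g s)) i))
    {w : Fin n → ℝ} (hw : ∀ i, 0 < w i)
    (hvar : ∀ i, varEst π (fun s => netMap B σ (g s)) i = w i *
      (σ i ^ 2 + errVec π B σ (fun s => netMap B σ (g s)) i ⬝ᵥ
        errVec π B σ (fun s => netMap B σ (g s)) i))
    (hsum : ∑ i, ((errVec π B σ (fun s => netMap B σ (g s)) i ⬝ᵥ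
        errVec π B σ (fun s => netMap B σ (g s)) i) / σ i ^ 2 + (w i - 1) ^ 2 / w i) / 2
          ≤ ε ^ 2) :
    Success π B σ ε fun s => netMap B σ (g s) := by
  set ω : Fin m → Fin n → ℝ := fun s => netMap B σ (g s) with hω
  have hD : ∀ i, 0 ≤ errVec π B σ ω i ⬝ᵥ errVec π B σ ω i := fun i => dotProduct_self_nonneg' _
  have hpos : ∀ i, 0 < varEst π ω i := fun i => by
    rw [hvar i]
    exact mul_pos (hw i) (add_pos_of_pos_of_nonneg (pow_pos (hσ i) 2) (hD i))
  have hsd : ∀ i, 0 < sdEst π ω i := fun i => Real.sqrt_pos.2 (hpos i)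
  have hsd2 : ∀ i, sdEst π ω i ^ 2 = varEst π ω i := fun i => Real.sq_sqrt (hpos i).le
  refine ⟨hgram, hsd, dTV_network_le hB ?_ hσ hsd
    (fun i g' => one_sub_coefMatrix_mulVec hB hπ ω i g') hε (le_trans ?_ hsum)⟩
  · intro i j hij
    have : j ∉ π i := fun h => hij (hlt i j h)
    simp [coefMatrix, this]
  · refine Finset.sum_le_sum fun i _ => ?_
    rw [hsd2, residVec_dotProduct_self hB hlt]
    exact entropy_le (hσ i) (hD i) (hw i) (hvar i)

/-- The estimator succeeds if both halves of the samples are nearly isometric on all node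
spans. -/
lemma success_of_nearIsometry (hB : ∀ i j, ¬ j < i → B i j = 0)
    (hπ : ∀ i j, j ∉ π i → B i j = 0) (hlt : ∀ i, ∀ j ∈ π i, j < i) (hσ : ∀ i, 0 < σ i)
    {ε : ℝ} (hε : 0 ≤ ε) (hm : 2 ≤ m) {τ : Fin n → ℝ} (hτ0 : ∀ i, 0 < τ i)
    (hτ : ∀ i, τ i ≤ 1 / 2) (hτε : ∑ i, 3 * τ i ^ 2 ≤ ε ^ 2) {g : Fin m → Fin n → ℝ}
    (h1 : ∀ i, NearIsometry (firstIdx m) (nodeSpan π B σ i) (τ i) g)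
    (h2 : ∀ i, NearIsometry (secondIdx m) (nodeSpan π B σ i) (τ i) g) :
    Success π B σ ε fun s => netMap B σ (g s) := by
  set ω : Fin m → Fin n → ℝ := fun s => netMap B σ (g s) with hω
  have hM : (0 : ℝ) < ((m - m / 2 : ℕ) : ℝ) := by
    have : 0 < m - m / 2 := by omega
    exact_mod_cast this
  have hR : ∀ i, 0 < σ i ^ 2 + errVec π B σ ω i ⬝ᵥ errVec π B σ ω i := fun i =>
    add_pos_of_pos_of_nonneg (pow_pos (hσ i) 2) (dotProduct_self_nonneg' _)
  let w : Fin n → ℝ := fun i =>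
    varEst π ω i / (σ i ^ 2 + errVec π B σ ω i ⬝ᵥ errVec π B σ ω i)
  have hwτ : ∀ i, |w i - 1| ≤ τ i := by
    intro i
    have hmem : WithLp.toLp 2 (residVec π B σ ω i) ∈ nodeSpan π B σ i := by
      rw [residVec, WithLp.toLp_sub, WithLp.toLp_smul]
      exact Submodule.sub_mem _ (Submodule.smul_mem _ _ (single_mem_nodeSpan i))
        (sum_rowVec_mem_nodeSpan i _)
    have h := (h2 i).dev_le hmem
    rw [residVec_dotProduct_self hB hlt] at h
    have e : w i - 1 = (∑ s, (residVec π B σ ω i ⬝ᵥ g (secondIdx m s)) ^ 2 -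
        ((m - m / 2 : ℕ) : ℝ) * (σ i ^ 2 + errVec π B σ ω i ⬝ᵥ errVec π B σ ω i)) /
        (((m - m / 2 : ℕ) : ℝ) * (σ i ^ 2 + errVec π B σ ω i ⬝ᵥ errVec π B σ ω i)) := by
      simp only [w]
      rw [hω, varEst_eq hB hπ, ← hω]
      have := (hR i).ne'
      field_simp
    rw [e, abs_div, abs_of_pos (mul_pos hM (hR i)), div_le_iff₀ (mul_pos hM (hR i))]
    linarith
  have hwlow : ∀ i, 1 / 2 ≤ w i := fun i => by
    have := (abs_le.1 (hwτ i)).1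
    linarith [hτ i]
  refine success_of_errors hB hπ hlt hσ hε
    (fun i => isUnit_gram_of_nearIsometry hB hσ (hτ i) hm (h1 i))
    (w := w) (fun i => by linarith [hwlow i]) (fun i => (div_mul_cancel₀ _ (hR i).ne').symm)
    ((Finset.sum_le_sum fun i _ => ?_).trans hτε)
  have e1 : errVec π B σ ω i ⬝ᵥ errVec π B σ ω i / σ i ^ 2 ≤ 4 * τ i ^ 2 := by
    rw [div_le_iff₀ (pow_pos (hσ i) 2)]
    exact errVec_normSq_le hB hπ hlt hσ (hτ0 i) (hτ i) hm (h1 i)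
  have e2 : (w i - 1) ^ 2 / w i ≤ 2 * τ i ^ 2 := by
    have h3 : (w i - 1) ^ 2 ≤ τ i ^ 2 := sq_le_sq' (by linarith [(abs_le.1 (hwτ i)).1])
      (abs_le.1 (hwτ i)).2
    rw [div_le_iff₀ (by linarith [hwlow i])]
    nlinarith [hwlow i, sq_nonneg (τ i)]
  linarith

end Error

/-! ### The probability of success -/

section Success

open Module

variable {m n : ℕ} {π : Fin n → Finset (Fin n)} {B : Matrix (Fin n) (Fin n) ℝ} {σ : Fin n → ℝ}

lemma nine_pow_mul_exp_le {q : ℕ} (hq : 1 ≤ q) {L x : ℝ} (hL : 1 / 2 ≤ L)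
    (hx : 9 * q * L ≤ x) : 9 ^ q * (2 * Real.exp (-x)) ≤ Real.exp (-L) / 2 := by
  have hq' : (1 : ℝ) ≤ q := by exact_mod_cast hq
  have h36 : (36 : ℝ) ≤ Real.exp 4 := by
    have h2 : (2.7 : ℝ) ≤ Real.exp 1 := by linarith [Real.exp_one_gt_d9]
    calc (36 : ℝ) ≤ 2.7 ^ 4 := by norm_num
      _ ≤ Real.exp 1 ^ 4 := by gcongr
      _ = Real.exp 4 := by rw [← Real.exp_nat_mul]; norm_num
  have h4 : (4 : ℝ) * 9 ^ q ≤ Real.exp (4 * q) := by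
    calc (4 : ℝ) * 9 ^ q ≤ 4 ^ q * 9 ^ q := by
          gcongr
          exact le_self_pow₀ (by norm_num) (by omega)
      _ = 36 ^ q := by rw [← mul_pow]; norm_num
      _ ≤ Real.exp 4 ^ q := by gcongr
      _ = Real.exp (4 * q) := by rw [← Real.exp_nat_mul]; congr 1; ring
  have h5 : Real.exp (4 * q) * Real.exp (-x) ≤ Real.exp (-L) := by
    rw [← Real.exp_add, Real.exp_le_exp]
    nlinarith
  have h6 := mul_le_mul_of_nonneg_right h4 (Real.exp_pos (-x)).le
  linarith

/-- The estimator succeeds with probability at least `1 - δ`, provided that `n / δ` is bounded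
away from `1`. -/
theorem one_sub_le_measure_success {ε δ : ℝ} (hε : 0 < ε) (hε1 : ε < 1) (hδ : 0 < δ)
    (hlt : ∀ i, ∀ j ∈ π i, j < i) (hπ : ∀ i j, j ∉ π i → B i j = 0) (hσ : ∀ i, 0 < σ i)
    (hn : 0 < n) (hL : 2 ≤ (n : ℝ) / δ)
    (hm : 50000 * ((n : ℝ) * max (avgInDegree π) 1 / ε ^ 2) * Real.log ((n : ℝ) / δ) ≤ m) :
    1 - δ ≤ (stdSamples m n).real {g | Success π B σ ε fun s => netMap B σ (g s)} := by
  have hB : ∀ i j, ¬ j < i → B i j = 0 := fun i j h => hπ i j fun hj => h (hlt i j hj)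
  set L := Real.log ((n : ℝ) / δ) with hLdef
  set W := (n : ℝ) * max (avgInDegree π) 1 with hW
  have hL' : 1 / 2 ≤ L := by
    have := Real.log_le_log (by norm_num) hL
    linarith [Real.log_two_gt_d9]
  have hn' : (1 : ℝ) ≤ n := by exact_mod_cast hn
  have hW1 : 1 ≤ W := by
    have : (1 : ℝ) ≤ max (avgInDegree π) 1 := le_max_right _ _
    nlinarith
  have hsumW := sum_card_add_one_le π
  rw [← hW] at hsumW
  have hq : ∀ i, ((π i).card : ℝ) + 1 ≤ 2 * W := fun i =>
    (Finset.single_le_sum (f := fun i => ((π i).card : ℝ) + 1) (fun i _ => by positivity)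
      (Finset.mem_univ i)).trans hsumW
  have hε2 : 0 < ε ^ 2 := by positivity
  have hε21 : ε ^ 2 ≤ 1 := pow_le_one₀ hε.le hε1.le
  have hm' : 50000 * W * L ≤ m * ε ^ 2 := by
    have := mul_le_mul_of_nonneg_right hm hε2.le
    refine le_trans (le_of_eq ?_) this
    field_simp
  have hm2 : 2 ≤ m := by
    have : (2 : ℝ) ≤ m := by nlinarith [Nat.cast_nonneg (α := ℝ) m]
    exact_mod_cast this
  have hM1 : (m : ℝ) / 3 ≤ (m / 2 : ℕ) := by
    have : m ≤ 3 * (m / 2) := by omega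
    have : (m : ℝ) ≤ 3 * (m / 2 : ℕ) := by exact_mod_cast this
    linarith
  have hM2 : (m : ℝ) / 3 ≤ (m - m / 2 : ℕ) := by
    have : m ≤ 3 * (m - m / 2) := by omega
    have : (m : ℝ) ≤ 3 * (m - m / 2 : ℕ) := by exact_mod_cast this
    linarith
  let τ : Fin n → ℝ := fun i => Real.sqrt (ε ^ 2 * (((π i).card : ℝ) + 1) / (24 * W))
  have hτpos : ∀ i, 0 < ε ^ 2 * (((π i).card : ℝ) + 1) / (24 * W) := fun i => by positivity
  have hτsq : ∀ i, τ i ^ 2 = ε ^ 2 * (((π i).card : ℝ) + 1) / (24 * W) := fun i =>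
    Real.sq_sqrt (hτpos i).le
  have hτ0 : ∀ i, 0 < τ i := fun i => Real.sqrt_pos.2 (hτpos i)
  have hτ : ∀ i, τ i ≤ 1 / 2 := fun i => by
    rw [Real.sqrt_le_left (by norm_num), div_le_iff₀ (by positivity)]
    nlinarith [hq i, Nat.cast_nonneg (α := ℝ) (π i).card]
  have hτε : ∑ i, 3 * τ i ^ 2 ≤ ε ^ 2 := by
    have : ∀ i, 3 * τ i ^ 2 = ε ^ 2 / (8 * W) * (((π i).card : ℝ) + 1) := fun i => by
      rw [hτsq]; field_simp; norm_num
    simp only [this]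
    rw [← Finset.mul_sum]
    calc ε ^ 2 / (8 * W) * ∑ i, (((π i).card : ℝ) + 1) ≤ ε ^ 2 / (8 * W) * (2 * W) := by gcongr
      _ = ε ^ 2 / 4 := by field_simp; norm_num
      _ ≤ ε ^ 2 := by linarith
  have hexp : ∀ (M : ℕ) (i : Fin n), (m : ℝ) / 3 ≤ M →
      9 * ((π i).card + 1 : ℕ) * L ≤ M * τ i ^ 2 / 64 := by
    intro M i hM
    have h1 : (50000 * W * L / 3) * ((((π i).card : ℝ) + 1) / (24 * W))
        ≤ (M * ε ^ 2) * ((((π i).card : ℝ) + 1) / (24 * W)) := by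
      refine mul_le_mul_of_nonneg_right ?_ (by positivity)
      have := mul_le_mul_of_nonneg_right hM hε2.le
      linarith
    have h2 : (50000 * W * L / 3) * ((((π i).card : ℝ) + 1) / (24 * W))
        = 50000 / 72 * ((((π i).card : ℝ) + 1) * L) := by field_simp; norm_num
    have h3 : M * τ i ^ 2 = (M * ε ^ 2) * ((((π i).card : ℝ) + 1) / (24 * W)) := by
      rw [hτsq]; ring
    rw [h2, ← h3] at h1
    have h4 : 0 ≤ (((π i).card : ℝ) + 1) * L := by positivity
    push_cast
    linarith
  have hexpL : Real.exp (-L) = δ / n := by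
    rw [Real.exp_neg, hLdef, Real.exp_log (by positivity), inv_div]
  have hfail : ∀ {M : ℕ} {e : Fin M → Fin m} (_ : Function.Injective e) (i : Fin n),
      (m : ℝ) / 3 ≤ M →
      (stdSamples m n).real {g | ¬ NearIsometry e (nodeSpan π B σ i) (τ i) g} ≤ δ / n / 2 := by
    intro M e he i hM
    refine (measure_not_nearIsometry_le he _ (hτ0 i).le (by linarith [hτ i])).trans ?_
    rw [← hexpL]
    refine le_trans ?_ (nine_pow_mul_exp_le (q := (π i).card + 1) (by omega) hL' (hexp M i hM))
    refine mul_le_mul_of_nonneg_right ?_ (by positivity)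
    exact pow_le_pow_right₀ (by norm_num) (finrank_nodeSpan_le i)
  have hcover : (Set.univ : Set (Fin m → Fin n → ℝ)) ⊆
      {g | Success π B σ ε fun s => netMap B σ (g s)} ∪
        ⋃ i ∈ (Finset.univ : Finset (Fin n)),
          ({g | ¬ NearIsometry (firstIdx m) (nodeSpan π B σ i) (τ i) g} ∪
            {g | ¬ NearIsometry (secondIdx m) (nodeSpan π B σ i) (τ i) g}) := by
    intro g _
    by_contra hg
    simp only [Set.mem_union, Set.mem_iUnion, Set.mem_ofPred_eq, Finset.mem_univ, exists_const,
      not_or, not_exists, not_not] at hg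
    exact hg.1 (success_of_nearIsometry hB hπ hlt hσ hε.le hm2 hτ0 hτ hτε
      (fun i => (hg.2 i).1) fun i => (hg.2 i).2)
  have h1 := (measureReal_mono (μ := stdSamples m n) hcover (measure_ne_top _ _)).trans
    (measureReal_union_le _ _)
  rw [probReal_univ] at h1
  have h2 : (stdSamples m n).real (⋃ i ∈ (Finset.univ : Finset (Fin n)),
      ({g | ¬ NearIsometry (firstIdx m) (nodeSpan π B σ i) (τ i) g} ∪
        {g | ¬ NearIsometry (secondIdx m) (nodeSpan π B σ i) (τ i) g})) ≤ δ := by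
    refine (measureReal_biUnion_finset_le _ _).trans ?_
    refine (Finset.sum_le_sum fun i _ => (measureReal_union_le _ _).trans (add_le_add
      (hfail firstIdx_injective i hM1) (hfail secondIdx_injective i hM2))).trans (le_of_eq ?_)
    simp only [Finset.sum_const, Finset.card_univ, Fintype.card_fin, nsmul_eq_mul]
    field_simp
    norm_num
  linarith

end Success

/-! ### Small deviations of the sum of squares -/

section SmallDeviations

open Real

variable {M : ℕ}

/-- Contracting a shell outside the sphere of radius `√M` does not decrease its measure. -/
lemma measure_smul_preimage_le {r : ℝ} (hr0 : 0 < r) (hr : r ≤ 1) {A : Set (Fin M → ℝ)}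
    (hA : MeasurableSet A) (hchi : ∀ y ∈ A, 0 ≤ chi y) :
    (Measure.pi fun _ : Fin M => gaussianReal 0 1).real {y | (fun s => r * y s) ∈ A}
      ≤ (Measure.pi fun _ : Fin M => gaussianReal 0 1).real A := by
  have h1 : (Measure.pi fun _ : Fin M => gaussianReal 0 1).map (fun y s => r * y s)
      = Measure.pi fun _ : Fin M => gaussianReal 0 (r ^ 2).toNNReal := by
    rw [Measure.pi_map_pi (f := fun _ y => r * y) fun i => by fun_prop]
    congr
    ext1 i
    rw [gaussianReal_map_const_mul]
    congr 1
    · simp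
    · ext; simp [sq_nonneg]
  have h2 : (Measure.pi fun _ : Fin M => gaussianReal 0 1) {y | (fun s => r * y s) ∈ A}
      = (Measure.pi fun _ : Fin M => gaussianReal 0 (r ^ 2).toNNReal) A := by
    rw [← h1, Measure.map_apply (by fun_prop) hA]; rfl
  refine ENNReal.toReal_mono (measure_ne_top _ _) ?_
  rw [h2, pi_gaussianReal_eq_withDensity (fun _ => by simpa using hr0.ne'),
    pi_gaussianReal_eq_withDensity (fun _ => one_ne_zero), withDensity_apply _ hA,
    withDensity_apply _ hA]
  refine setLIntegral_mono' hA fun y hy => ENNReal.ofReal_le_ofReal ?_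
  have e : ∀ s, gaussianPDFReal 0 (r ^ 2).toNNReal (y s) = gaussianPDFReal 0 1 (y s) *
      exp (-(log (r ^ 2) / 2 - y s ^ 2 / 2 + y s ^ 2 / (2 * r ^ 2))) := fun s => by
    have := gaussianPDFReal_eq_mul_exp one_pos hr0 (y s) (y s)
    simpa using this
  simp only [e]
  rw [Finset.prod_mul_distrib, ← exp_sum]
  refine mul_le_of_le_one_right (Finset.prod_nonneg fun s _ => gaussianPDFReal_nonneg _ _ _) ?_
  rw [exp_le_one_iff]
  have hr2 : 0 < r ^ 2 := by positivity
  have hinv : 1 ≤ (r ^ 2)⁻¹ := (one_le_inv₀ hr2).2 (pow_le_one₀ hr0.le hr)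
  have hlog := one_sub_inv_le_log_of_pos hr2
  have hsum : ∑ s, -(log (r ^ 2) / 2 - y s ^ 2 / 2 + y s ^ 2 / (2 * r ^ 2))
      = -(M * (log (r ^ 2) + (r ^ 2)⁻¹ - 1) + ((r ^ 2)⁻¹ - 1) * chi y) / 2 := by
    have hs : ∀ s, -(log (r ^ 2) / 2 - y s ^ 2 / 2 + y s ^ 2 / (2 * r ^ 2))
        = -((log (r ^ 2) + (r ^ 2)⁻¹ - 1) / 2) + -(((r ^ 2)⁻¹ - 1) / 2) * (y s ^ 2 - 1) :=
      fun s => by field_simp; ring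
    simp only [hs, Finset.sum_add_distrib, ← Finset.mul_sum]
    rw [← chi, Finset.sum_const, Finset.card_univ, Fintype.card_fin, nsmul_eq_mul]
    ring
  rw [hsum]
  have := mul_nonneg (Nat.cast_nonneg (α := ℝ) M)
    (by linarith : 0 ≤ log (r ^ 2) + (r ^ 2)⁻¹ - 1)
  have := mul_nonneg (by linarith : 0 ≤ (r ^ 2)⁻¹ - 1) (hchi y hy)
  linarith

lemma sum_sq_eq_chi (y : Fin M → ℝ) : ∑ s, y s ^ 2 = M + chi y := by
  simp [chi, Finset.sum_sub_distrib]

lemma chi_smul (r : ℝ) (y : Fin M → ℝ) : chi (fun s => r * y s) = r ^ 2 * (M + chi y) - M := by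
  rw [← sum_sq_eq_chi, chi, Finset.mul_sum]
  simp [Finset.sum_sub_distrib, mul_pow]

/-- The shell `M ≤ |y|² ≤ (1 + t)^N M` is covered by `N` dilates of `M ≤ |y|² ≤ (1 + t) M`. -/
lemma measure_shell_le (hM : 0 < M) {t x : ℝ} (ht : 0 < t) {N : ℕ} (hN : x < M * (N * t)) :
    (Measure.pi fun _ : Fin M => gaussianReal 0 1).real {y | 0 ≤ chi y ∧ chi y ≤ x}
      ≤ N * (Measure.pi fun _ : Fin M => gaussianReal 0 1).real
        {y | 0 ≤ chi y ∧ chi y ≤ M * t} := by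
  have hM' : (0 : ℝ) < M := by exact_mod_cast hM
  set A : Set (Fin M → ℝ) := {y | 0 ≤ chi y ∧ chi y ≤ M * t} with hA
  have hAm : MeasurableSet A :=
    (measurableSet_le measurable_const measurable_chi).inter
      (measurableSet_le measurable_chi measurable_const)
  let r : ℕ → ℝ := fun k => √(((1 + t) ^ k)⁻¹)
  have hr2 : ∀ k, r k ^ 2 = ((1 + t) ^ k)⁻¹ := fun k => sq_sqrt (by positivity)
  have hr0 : ∀ k, 0 < r k := fun k => sqrt_pos.2 (by positivity)
  have hr1 : ∀ k, r k ≤ 1 := fun k => by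
    rw [sqrt_le_one]
    exact inv_le_one_of_one_le₀ (one_le_pow₀ (by linarith))
  have hcover : {y : Fin M → ℝ | 0 ≤ chi y ∧ chi y ≤ x} ⊆
      ⋃ k ∈ Finset.range N, {y | (fun s => r k * y s) ∈ A} := by
    rintro y ⟨hy0, hyx⟩
    obtain ⟨k, hk1, hk2⟩ := exists_nat_pow_near (x := 1 + chi y / M) (y := 1 + t)
      (by have : 0 ≤ chi y / M := by positivity
          linarith) (by linarith)
    have hkN : k < N := by
      by_contra! hcon
      have h1 : (1 + t) ^ N ≤ (1 + t) ^ k := pow_le_pow_right₀ (by linarith) hcon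
      have h2 := one_add_mul_le_pow (a := t) (by linarith) N
      have h3 : chi y / M < N * t := by
        rw [div_lt_iff₀ hM']; linarith
      linarith
    simp only [Set.mem_iUnion, Finset.mem_range]
    refine ⟨k, hkN, ?_⟩
    have hp : 0 < (1 + t) ^ k := by positivity
    have e : (M : ℝ) + chi y = M * (1 + chi y / M) := by field_simp
    change 0 ≤ chi _ ∧ chi _ ≤ _
    rw [chi_smul, hr2, e]
    have e2 : ((1 + t) ^ k)⁻¹ * (M * (1 + chi y / M)) - M
        = M * ((1 + chi y / M) / (1 + t) ^ k - 1) := by field_simp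
    rw [e2]
    constructor
    · refine mul_nonneg hM'.le ?_
      rw [sub_nonneg, one_le_div₀ hp]
      exact hk1
    · refine mul_le_mul_of_nonneg_left ?_ hM'.le
      rw [sub_le_iff_le_add, div_le_iff₀ hp]
      rw [pow_succ] at hk2
      linarith
  refine (measureReal_mono hcover (measure_ne_top _ _)).trans
    ((measureReal_biUnion_finset_le _ _).trans ?_)
  refine (Finset.sum_le_sum fun k _ =>
    measure_smul_preimage_le (hr0 k) (hr1 k) hAm fun y hy => hy.1).trans (le_of_eq ?_)
  simp

/-- The sum of squares exceeds its mean with probability bounded below. -/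
lemma measure_chi_nonneg_ge (hM : 0 < M) :
    1 / 8192 ≤ (Measure.pi fun _ : Fin M => gaussianReal 0 1).real {y | 0 ≤ chi y} := by
  have hM' : (0 : ℝ) < M := by exact_mod_cast hM
  set γ := Measure.pi fun _ : Fin M => gaussianReal 0 1 with hγ
  set s : Set (Fin M → ℝ) := {y | 0 ≤ chi y} with hs
  have hsm : MeasurableSet s := measurableSet_le measurable_const measurable_chi
  have hsq : 1 ≤ √(M : ℝ) := one_le_sqrt.2 (by exact_mod_cast hM)
  set t := 1 / (8 * √(M : ℝ)) with ht
  have ht0 : 0 < t := by positivity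
  have ht8 : t ≤ 1 / 8 := by
    rw [ht]; exact one_div_le_one_div_of_le (by norm_num) (by linarith)
  have htM : M * t ^ 2 = 1 / 64 := by
    rw [ht, div_pow, mul_pow, sq_sqrt hM'.le]; field_simp; norm_num
  obtain ⟨i1, v1⟩ := integral_exp_chi (M := M) (t := t) (by linarith)
  obtain ⟨i2, -⟩ := integral_exp_chi (M := M) (t := 2 * t) (by linarith)
  have b2 := integral_exp_chi_le (M := M) (t := 2 * t) (by linarith)
  rw [← hγ] at i1 i2 v1 b2
  have e2 : ∀ y : Fin M → ℝ, exp (t * chi y) ^ 2 = exp (2 * t * chi y) := fun y => by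
    rw [← exp_nat_mul]; congr 1; push_cast; ring
  have hlow : 1 + 1 / 64 ≤ ∫ y, exp (t * chi y) ∂γ := by
    rw [v1]
    have h1 := mul_le_mul_of_nonneg_left
      (le_neg_log_one_sub ht0.le (by linarith : t < 1 / 2)) hM'.le
    rw [htM] at h1
    have := add_one_le_exp ((M : ℝ) * (-log (1 - 2 * t) / 2 - t))
    linarith
  have hcompl : ∫ y in sᶜ, exp (t * chi y) ∂γ ≤ 1 := by
    calc ∫ y in sᶜ, exp (t * chi y) ∂γ ≤ ∫ y in sᶜ, (1 : ℝ) ∂γ := by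
          refine setIntegral_mono_on i1.integrableOn (integrable_const _).integrableOn hsm.compl
            fun y hy => ?_
          have hy' : chi y < 0 := not_le.1 hy
          rw [exp_le_one_iff]
          exact mul_nonpos_of_nonneg_of_nonpos ht0.le hy'.le
      _ ≤ 1 := by
          simp only [integral_const, smul_eq_mul, mul_one, measureReal_restrict_apply_univ]
          exact measureReal_le_one
  have hsplit := integral_add_compl hsm i1
  have hI : 1 / 64 ≤ ∫ y in s, exp (t * chi y) ∂γ := by linarith
  have hCS := sq_integral_le (μ := γ.restrict s) i1.restrict
    (by simp only [e2]; exact i2.restrict)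
  simp only [e2, measureReal_restrict_apply_univ] at hCS
  have hup : ∫ y in s, exp (2 * t * chi y) ∂γ ≤ 4 / 3 := by
    calc ∫ y in s, exp (2 * t * chi y) ∂γ ≤ ∫ y, exp (2 * t * chi y) ∂γ :=
          setIntegral_le_integral i2 (Filter.Eventually.of_forall fun y => (exp_pos _).le)
      _ ≤ exp (1 / 4) := by
          refine b2.trans (le_of_eq ?_)
          congr 1
          calc (M : ℝ) * (4 * (2 * t) ^ 2) = 16 * (M * t ^ 2) := by ring
            _ = 1 / 4 := by rw [htM]; norm_num
      _ ≤ 4 / 3 := by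
          have := add_one_le_exp (-(1 / 4 : ℝ))
          have h3 : exp (1 / 4 : ℝ) * exp (-(1 / 4)) = 1 := by rw [← exp_add]; simp
          nlinarith [exp_pos (1 / 4 : ℝ)]
  have hγ0 : 0 ≤ γ.real s := measureReal_nonneg
  have hsq2 : (1 / 64 : ℝ) ^ 2 ≤ (∫ y in s, exp (t * chi y) ∂γ) ^ 2 := by gcongr
  nlinarith

lemma measure_chi_large_le (hM : 0 < M) :
    (Measure.pi fun _ : Fin M => gaussianReal 0 1).real {y | 61 * √(M : ℝ) ≤ chi y}
      ≤ 1 / 16384 := by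
  have hM' : (0 : ℝ) < M := by exact_mod_cast hM
  have hsq : 1 ≤ √(M : ℝ) := one_le_sqrt.2 (by exact_mod_cast hM)
  have h := measure_chi_ge_le (M := M) (t := 1 / (4 * √(M : ℝ))) (by positivity)
    (one_div_le_one_div_of_le (by norm_num) (by linarith)) (61 * √(M : ℝ))
  refine h.trans ?_
  have e : -(1 / (4 * √(M : ℝ))) * (61 * √(M : ℝ)) + M * (4 * (1 / (4 * √(M : ℝ))) ^ 2) = -15 := by
    have h2 : √(M : ℝ) ^ 2 = M := sq_sqrt hM'.le
    have h3 : (M : ℝ) * (4 * (1 / (4 * √(M : ℝ))) ^ 2) = 1 / 4 := by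
      rw [div_pow, mul_pow, h2]; field_simp
    have h4 : -(1 / (4 * √(M : ℝ))) * (61 * √(M : ℝ)) = -(61 / 4) := by field_simp
    rw [h3, h4]; norm_num
  rw [e, Real.exp_neg, inv_le_comm₀ (exp_pos _) (by norm_num)]
  have h2 : (2 : ℝ) ≤ exp 1 := by linarith [exp_one_gt_d9]
  calc (1 / 16384 : ℝ)⁻¹ ≤ 2 ^ 15 := by norm_num
    _ ≤ exp 1 ^ 15 := by gcongr
    _ = exp 15 := by rw [← exp_nat_mul]; norm_num

/-- A lower bound for the probability of small deviations of the sum of squares. -/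
lemma measure_small_deviation_ge (hM : 0 < M) {ε : ℝ} (hε : 0 < ε) (hMε : M * ε ^ 2 ≤ 50000) :
    M * ε ^ 2 / 1200000000 ≤
      (Measure.pi fun _ : Fin M => gaussianReal 0 1).real {y | 0 ≤ chi y ∧ chi y ≤ M * ε} := by
  have hM' : (0 : ℝ) < M := by exact_mod_cast hM
  set γ := Measure.pi fun _ : Fin M => gaussianReal 0 1 with hγ
  set p := γ.real {y | 0 ≤ chi y ∧ chi y ≤ M * ε} with hp
  set x := √(M : ℝ) * ε with hx
  have hx0 : 0 < x := mul_pos (sqrt_pos.2 hM') hε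
  have hx2 : x ^ 2 = M * ε ^ 2 := by rw [hx, mul_pow, sq_sqrt hM'.le]
  have hx224 : x ≤ 224 := by nlinarith
  set N := ⌊61 / x⌋₊ + 1 with hN
  have hN1 : 61 / x < N := by rw [hN]; push_cast; exact Nat.lt_floor_add_one _
  have hN2 : (N : ℝ) ≤ 61 / x + 1 := by
    rw [hN]; push_cast
    have := Nat.floor_le (by positivity : 0 ≤ 61 / x)
    linarith
  have hcov := measure_shell_le hM (x := 61 * √(M : ℝ)) hε (N := N) (by
    rw [div_lt_iff₀ hx0] at hN1
    have h1 := mul_lt_mul_of_pos_left hN1 (sqrt_pos.2 hM')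
    have h2 : √(M : ℝ) * (N * x) = M * (N * ε) := by
      have := mul_self_sqrt hM'.le
      rw [hx]; linear_combination (N * ε) * this
    linarith)
  rw [← hγ, ← hp] at hcov
  have hmid : 1 / 16384 ≤ γ.real {y | 0 ≤ chi y ∧ chi y ≤ 61 * √(M : ℝ)} := by
    have h1 := measure_chi_nonneg_ge hM
    have h2 := measure_chi_large_le hM
    have h3 : {y : Fin M → ℝ | 0 ≤ chi y} ⊆
        {y | 0 ≤ chi y ∧ chi y ≤ 61 * √(M : ℝ)} ∪ {y | 61 * √(M : ℝ) ≤ chi y} := by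
      intro y hy
      rcases le_total (chi y) (61 * √(M : ℝ)) with h | h
      · exact .inl ⟨hy, h⟩
      · exact .inr h
    have h4 := (measureReal_mono (μ := γ) h3 (measure_ne_top _ _)).trans (measureReal_union_le _ _)
    linarith
  have hp0 : 0 ≤ p := measureReal_nonneg
  have h5 : 1 / 16384 ≤ (61 / x + 1) * p :=
    hmid.trans (hcov.trans (mul_le_mul_of_nonneg_right hN2 hp0))
  have h6 : x / 16384 ≤ (61 + x) * p := by
    have := mul_le_mul_of_nonneg_left h5 hx0.le
    have e : x * ((61 / x + 1) * p) = (61 + x) * p := by field_simp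
    rw [e] at this
    linarith
  have h7 : x / 16384 ≤ 300 * p :=
    h6.trans (mul_le_mul_of_nonneg_right (by linarith) hp0)
  rw [← hx2]
  nlinarith

end SmallDeviations

/-! ### A single node -/

section SingleNode

variable {m : ℕ} {π : Fin 1 → Finset (Fin 1)} {B : Matrix (Fin 1) (Fin 1) ℝ} {σ : Fin 1 → ℝ}

lemma success_of_chi {ε : ℝ} (hε : 0 < ε) (hm : 1 ≤ m)
    (hlt : ∀ i, ∀ j ∈ π i, j < i) (hπ : ∀ i j, j ∉ π i → B i j = 0) (hσ : ∀ i, 0 < σ i)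
    {g : Fin m → Fin 1 → ℝ} (h0 : 0 ≤ chi fun s => g (secondIdx m s) 0)
    (h1 : chi (fun s => g (secondIdx m s) 0) ≤ (m - m / 2 : ℕ) * ε) :
    Success π B σ ε fun s => netMap B σ (g s) := by
  have hB : ∀ i j, ¬ j < i → B i j = 0 := fun i j h => hπ i j fun hj => h (hlt i j hj)
  have hempty : ∀ i, IsEmpty {j // j ∈ π i} := fun i =>
    ⟨fun j => absurd (hlt i j.1 j.2) (by simp [Subsingleton.elim j.1 i])⟩
  have hM : (0 : ℝ) < ((m - m / 2 : ℕ) : ℝ) := by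
    have : 0 < m - m / 2 := by omega
    exact_mod_cast this
  have herr : ∀ i, errVec π B σ (fun s => netMap B σ (g s)) i = 0 := fun i => by
    rw [errVec]
    exact Finset.sum_eq_zero fun l _ => (hempty i).elim l
  set z := chi (fun s => g (secondIdx m s) 0) / (m - m / 2 : ℕ) with hz
  have hz0 : 0 ≤ z := by positivity
  have hz1 : z ≤ ε := by rw [hz, div_le_iff₀ hM]; linarith
  refine success_of_errors hB hπ hlt hσ hε.le (fun i => ?_) (w := fun _ => 1 + z)
    (fun _ => by linarith) (fun i => ?_) ?_
  · rw [isUnit_gram_iff]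
    intro v _
    ext l
    exact (hempty i).elim l
  · rw [varEst_eq hB hπ, herr, residVec, herr, sub_zero, dotProduct_zero, add_zero]
    have : ∀ s, ((σ i • Pi.single i 1 : Fin 1 → ℝ) ⬝ᵥ g (secondIdx m s)) ^ 2
        = σ i ^ 2 * (g (secondIdx m s) 0) ^ 2 := fun s => by
      rw [smul_dotProduct, single_dotProduct, Subsingleton.elim i 0, smul_eq_mul]; ring
    simp only [this]
    rw [← Finset.mul_sum, sum_sq_eq_chi (fun s => g (secondIdx m s) 0), hz]
    field_simp
  · simp only [herr, dotProduct_zero, zero_div, Finset.univ_unique, Finset.sum_const,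
      Finset.card_singleton, one_smul, zero_add, add_sub_cancel_left]
    have h2 : z ^ 2 / (1 + z) ≤ z ^ 2 := div_le_self (sq_nonneg z) (by linarith)
    have h3 : z ^ 2 ≤ ε ^ 2 := by gcongr
    linarith [sq_nonneg z]

lemma le_measure_success_single {ε : ℝ} (hε : 0 < ε) (hm : 1 ≤ m) (hmε : m * ε ^ 2 ≤ 50000)
    (hlt : ∀ i, ∀ j ∈ π i, j < i) (hπ : ∀ i j, j ∉ π i → B i j = 0) (hσ : ∀ i, 0 < σ i) :
    m * ε ^ 2 / 2400000000 ≤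
      (stdSamples m 1).real {g | Success π B σ ε fun s => netMap B σ (g s)} := by
  have hM : 0 < m - m / 2 := by omega
  have hM1 : ((m - m / 2 : ℕ) : ℝ) ≤ m := by exact_mod_cast Nat.sub_le _ _
  have hM2 : (m : ℝ) / 2 ≤ ((m - m / 2 : ℕ) : ℝ) := by
    have : m ≤ 2 * (m - m / 2) := by omega
    have : (m : ℝ) ≤ 2 * (m - m / 2 : ℕ) := by exact_mod_cast this
    linarith
  have hε2 : 0 < ε ^ 2 := by positivity
  have h := measure_small_deviation_ge hM hε
    ((mul_le_mul_of_nonneg_right hM1 hε2.le).trans hmε)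
  have hc : (Pi.single 0 1 : Fin 1 → ℝ) ⬝ᵥ Pi.single 0 1 = 1 := by simp
  have hmeas : Measurable fun (g : Fin m → Fin 1 → ℝ) (s : Fin (m - m / 2)) =>
      (Pi.single 0 1 : Fin 1 → ℝ) ⬝ᵥ g (secondIdx m s) := by
    unfold dotProduct; fun_prop
  rw [← map_dotProduct_stdSamples (secondIdx_injective (m := m)) hc, map_measureReal_apply hmeas
    (show MeasurableSet {y : Fin (m - m / 2) → ℝ | 0 ≤ chi y ∧ chi y ≤ (m - m / 2 : ℕ) * ε} from
      (measurableSet_le measurable_const measurable_chi).inter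
        (measurableSet_le measurable_chi measurable_const))] at h
  have h2 := mul_le_mul_of_nonneg_right hM2 hε2.le
  refine le_trans (by linarith) (h.trans (measureReal_mono ?_ (measure_ne_top _ _)))
  rintro g ⟨hg0, hg1⟩
  simp only [single_dotProduct, one_mul] at hg0 hg1
  exact success_of_chi hε hm hlt hπ hσ hg0 hg1

end SingleNode

/-! ### Sample complexity -/

section SampleComplexity

variable {m n : ℕ} {π : Fin n → Finset (Fin n)} {B : Matrix (Fin n) (Fin n) ℝ} {σ : Fin n → ℝ}

lemma ofReal_le_pi_network {ε p : ℝ}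
    (h : p ≤ (stdSamples m n).real {g | Success π B σ ε fun s => netMap B σ (g s)}) :
    ENNReal.ofReal p ≤ (Measure.pi fun _ : Fin m => network B σ) {ω | Success π B σ ε ω} := by
  have e : (Measure.pi fun _ : Fin m => network B σ)
      = (stdSamples m n).map fun g s => netMap B σ (g s) := by
    have : ∀ s : Fin m, AEMeasurable (netMap B σ) (Measure.pi fun _ : Fin n => gaussianReal 0 1) :=
      fun _ => (measurable_netMap B σ).aemeasurable
    rw [stdSamples, Measure.pi_map_pi (f := fun _ => netMap B σ) this]
    simp only [network_eq_map]
  have hmeas : Measurable fun (g : Fin m → Fin n → ℝ) s => netMap B σ (g s) :=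
    measurable_pi_lambda _ fun s => (measurable_netMap B σ).comp (measurable_pi_apply s)
  rw [e]
  refine le_trans ?_ (Measure.le_map_apply hmeas.aemeasurable _)
  exact ENNReal.ofReal_le_of_le_toReal h

/-- The estimator succeeds with probability at least `1 - δ`. -/
theorem sample_complexity {ε δ : ℝ} (hε : 0 < ε) (hε1 : ε < 1) (hδ : 0 < δ) (hδ1 : δ < 1)
    (hlt : ∀ i, ∀ j ∈ π i, j < i) (hπ : ∀ i j, j ∉ π i → B i j = 0) (hσ : ∀ i, 0 < σ i)
    (hm : 2400000000 * ((n : ℝ) * max (avgInDegree π) 1 / ε ^ 2) * Real.log ((n : ℝ) / δ) ≤ m) :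
    1 - δ ≤ (stdSamples m n).real {g | Success π B σ ε fun s => netMap B σ (g s)} := by
  rcases Nat.eq_zero_or_pos n with rfl | hn
  · have : {g : Fin m → Fin 0 → ℝ | Success π B σ ε fun s => netMap B σ (g s)} = Set.univ := by
      refine Set.eq_univ_of_forall fun g => ?_
      exact success_of_errors (w := fun _ => 1) (fun i => i.elim0) hπ hlt hσ hε.le
        (fun i => i.elim0) (fun i => i.elim0) (fun i => i.elim0) (by simp; positivity)
    rw [this, probReal_univ]
    linarith
  have hn' : (1 : ℝ) ≤ n := by exact_mod_cast hn
  have hε2 : 0 < ε ^ 2 := by positivity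
  by_cases hL : 2 ≤ (n : ℝ) / δ
  · refine one_sub_le_measure_success hε hε1 hδ hlt hπ hσ hn hL (le_trans ?_ hm)
    have h1 : 0 ≤ Real.log ((n : ℝ) / δ) := Real.log_nonneg (by linarith)
    have h2 : 0 ≤ (n : ℝ) * max (avgInDegree π) 1 / ε ^ 2 := by positivity
    have := mul_nonneg h2 h1
    nlinarith
  rw [not_le, div_lt_iff₀ hδ] at hL
  obtain rfl : n = 1 := by
    have : (n : ℝ) < 2 := by nlinarith
    have : n < 2 := by exact_mod_cast this
    omega
  have hmax : max (avgInDegree π) 1 = 1 := by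
    refine max_eq_right ?_
    have : ∀ i, π i = ∅ := fun i => Finset.eq_empty_of_forall_notMem fun j hj => by
      have := hlt i j hj
      simp [Subsingleton.elim j i] at this
    simp [avgInDegree, this]
  rw [hmax] at hm
  simp only [Nat.cast_one, one_mul, one_div] at hm hL
  rw [Real.log_inv] at hm
  have hlog : 1 - δ ≤ -Real.log δ := by linarith [Real.log_le_sub_one_of_pos hδ]
  have hm' : 2400000000 * (-Real.log δ) ≤ m * ε ^ 2 := by
    have := mul_le_mul_of_nonneg_right hm hε2.le
    refine le_trans (le_of_eq ?_) this
    field_simp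
  by_cases hbig : (m : ℝ) * ε ^ 2 ≤ 50000
  · have hm1 : 1 ≤ m := by
      by_contra! h0
      obtain rfl : m = 0 := by omega
      simp at hm'
      linarith
    refine le_trans ?_ (le_measure_success_single hε hm1 hbig hlt hπ hσ)
    linarith
  · have := one_sub_le_measure_success (m := m) (δ := 1 / 2) hε hε1 (by norm_num) hlt hπ hσ hn
      (by norm_num) (by
        rw [hmax]
        have h2 : Real.log (((1 : ℕ) : ℝ) / (1 / 2)) ≤ 1 := by
          norm_num; linarith [Real.log_two_lt_d9]
        have h3 : (50000 : ℝ) / ε ^ 2 ≤ m := by rw [div_le_iff₀ hε2]; linarith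
        calc 50000 * (((1 : ℕ) : ℝ) * 1 / ε ^ 2) * Real.log (((1 : ℕ) : ℝ) / (1 / 2))
            ≤ 50000 * (((1 : ℕ) : ℝ) * 1 / ε ^ 2) * 1 := by gcongr
          _ = 50000 / ε ^ 2 := by simp [div_eq_mul_inv]
          _ ≤ m := h3)
    linarith

end SampleComplexity

end GaussBN

/-- Learning a Gaussian Bayesian network by node-wise least squares: the sample complexity, and
the number of arithmetic operations that computing the estimator takes. -/
theorem stmt_7 : ∃ C : ℝ, 0 < C ∧
    -- sample complexity
    (∀ (ε δ : ℝ), 0 < ε → ε < 1 → 0 < δ → δ < 1 →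
      ∀ (n d : ℕ) (π : Fin n → Finset (Fin n)),
        (∀ i, ∀ j ∈ π i, j < i) →
        (∀ i, (π i).card ≤ d) →
        ∀ (B : Matrix (Fin n) (Fin n) ℝ) (σ : Fin n → ℝ),
          (∀ i j, j ∉ π i → B i j = 0) →
          (∀ i, 0 < σ i) →
          ∀ m : ℕ,
            C * ((n : ℝ) * max (GaussBN.avgInDegree π) 1 / ε ^ 2) * Real.log ((n : ℝ) / δ)
              ≤ (m : ℝ) →
            ENNReal.ofReal (1 - δ) ≤
              (MeasureTheory.Measure.pi fun _ : Fin m => GaussBN.network B σ)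
                {ω | (∀ i, IsUnit (GaussBN.gram π ω i)) ∧
                     (∀ i, 0 < GaussBN.sdEst π ω i) ∧
                     GaussBN.dTV (GaussBN.network B σ)
                       (GaussBN.network (GaussBN.coefMatrix π ω) (GaussBN.sdEst π ω)) ≤ ε}) ∧
    -- running time
    (∀ (n d : ℕ) (π : Fin n → Finset (Fin n)),
      (∀ i, ∀ j ∈ π i, j < i) →
      (∀ i, (π i).card ≤ d) →
      ∀ m : ℕ, 1 ≤ m →
        ∃ (prog : List (GaussBN.Instr (Fin m × Fin n)))
          (coefOut : ∀ i : Fin n, {j // j ∈ π i} → GaussBN.Operand (Fin m × Fin n))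
          (varOut : Fin n → GaussBN.Operand (Fin m × Fin n)),
          GaussBN.ComputesEstimator π prog coefOut varOut ∧
          (prog.length : ℝ) ≤
            C * (m : ℝ) * ((n : ℝ) * max (GaussBN.avgInDegree π) 1) * max (d : ℝ) 1) := by
  refine ⟨2400000000, by norm_num, ?_, ?_⟩
  · intro ε δ hε hε1 hδ hδ1 n d π hlt _ B σ hπ hσ m hm
    exact GaussBN.ofReal_le_pi_network
      (GaussBN.sample_complexity hε hε1 hδ hδ1 hlt hπ hσ hm)
  · intro n d π _ hd m hm
    obtain ⟨prog, coefOut, varOut, h, hlen⟩ := GaussBN.exists_program n d π hd m hm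
    refine ⟨prog, coefOut, varOut, h, hlen.trans ?_⟩
    gcongr
    norm_num
end
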